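/- Let r be a positive integer and let ε > 0. There exists a constant C = C(r, ε) such that the following holds. Let p be a prime, let K, M, N be real numbers with 1 < K, M, N < p and M > 4·p^{1/(2r)}, let a, b be integers with p ∤ ab, let χ be a non-trivial multiplicative character modulo p, and let β = (β_{k,n}) be complex numbers indexed by pairs of positive integers with |β_{k,n}| ≤ 1 for all k, n. Then |∑_{1 ≤ k ≤ K} ∑_{1 ≤ m ≤ M} ∑_{1 ≤ n ≤ N} β_{k,n} · χ(a·k + b·m·n)| ≤ C · p^ε · K·M·N · Δ₁, where Δ₁ = (1 + N/K)^{1/(2r)} · (1 + (|a|·K + |b|·M·N)·M·N·p^{-1-1/(2r)})^{1/(2r)} · (p^{1+1/r}/(M⁴·N⁴))^{1/(4r)}. -/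

import Mathlib

namespace TT
open Finset Polynomial

/-- representation of weights -/
lemma exists_weight (d D : ℕ) (hd : 0 < d) (hc : Nat.Coprime D d) (n : ℕ) (hn : (d-1)*D ≤ n) :
    ∃ q : ℕ × ℕ, q.2 < d ∧ d * q.1 + D * q.2 = n := by
  obtain ⟨y, hy⟩ := Nat.exists_mul_mod_eq_of_coprime n hc hd.ne'
  have h1 : D * (y % d) ≡ n [MOD d] := by
    have : D * (y % d) ≡ D * y [MOD d] := (Nat.mod_modEq y d).mul_left D
    exact this.trans hy.2
  have hlt : y % d < d := Nat.mod_lt _ hd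
  have hle : D * (y % d) ≤ n := by
    refine le_trans ?_ hn
    rw [mul_comm]
    exact Nat.mul_le_mul_right _ (by omega)
  obtain ⟨a, ha⟩ := (Nat.modEq_iff_dvd' hle).1 h1
  exact ⟨(a, y % d), hlt, by simp only; omega⟩

lemma weight_inj (d D : ℕ) (hc : Nat.Coprime D d) {c k c' k' : ℕ} (hk : k < d) (hk' : k' < d)
    (h : d * c + D * k = d * c' + D * k') : c = c' ∧ k = k' := by
  have h1 : D * k ≡ D * k' [MOD d] := by
    have : (d * c + D * k) % d = (d * c' + D * k') % d := by rw [h]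
    simpa [Nat.ModEq, Nat.mul_add_mod] using this
  have h2 : k ≡ k' [MOD d] := Nat.ModEq.cancel_left_of_coprime (by rwa [Nat.coprime_comm] at hc) h1
  have h3 : k = k' := by
    rwa [Nat.ModEq, Nat.mod_eq_of_lt hk, Nat.mod_eq_of_lt hk'] at h2
  subst h3
  refine ⟨?_, rfl⟩
  have : d * c = d * c' := by omega
  exact Nat.eq_of_mul_eq_mul_left (by omega) this

variable {K : Type*} [Field K]

/-- component k of x^A y^e -/
noncomputable def phi (f : K[X]) (d A e k : ℕ) : K[X] :=
  if e % d = k then X ^ A * f ^ (e / d) else 0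

lemma phi_eval (f : K[X]) (d A e : ℕ) (hd : 0 < d) (x y : K) (hy : y ^ d = f.eval x) :
    ∑ k ∈ range d, (phi f d A e k).eval x * y ^ k = x ^ A * y ^ e := by
  rw [Finset.sum_eq_single (e % d)]
  · simp only [phi, if_true, eval_mul, eval_pow, eval_X]
    rw [← hy, ← pow_mul, mul_assoc, ← pow_add, Nat.div_add_mod]
  · intro k _ hk
    simp [phi, Ne.symm hk]
  · intro h
    exact absurd (mem_range.2 (Nat.mod_lt _ hd)) h

lemma phi_natDegree (f : K[X]) (hf : f ≠ 0) (d A e k : ℕ) (h : e % d = k) :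
    d * (phi f d A e k).natDegree + f.natDegree * k = d * A + f.natDegree * e := by
  subst h
  have : (phi f d A e (e % d)).natDegree = A + (e / d) * f.natDegree := by
    simp only [phi, if_true]
    rw [natDegree_mul (pow_ne_zero _ X_ne_zero) (pow_ne_zero _ hf), natDegree_pow, natDegree_pow,
      natDegree_X, mul_one]
  rw [this]
  conv_rhs => rw [← Nat.div_add_mod e d]
  ring

theorem stepanov [Fintype K] [DecidableEq K] (pp nn : ℕ) [ExpChar K pp] (s : ℕ) (hs : s = pp ^ nn)
    (hK : Fintype.card K = s ^ 2) (d : ℕ) (hd : 0 < d) (hdK : d ∣ s ^ 2 - 1) (f : K[X])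
    (hc : Nat.Coprime f.natDegree d) (hf0 : f ≠ 0) (G : ℕ) (hG : G = (d - 1) * f.natDegree)
    (hsG : G ^ 2 + 3 * G + 1 < s) :
    d * #{x : K | f.eval x ≠ 0 ∧ ∃ y, y ^ d = f.eval x} ≤ s ^ 2 + (2 * G + 1) * s := by
  set D := f.natDegree with hD
  have hw : ∀ n, ∃ q : ℕ × ℕ, G ≤ n → q.2 < d ∧ d * q.1 + D * q.2 = n := by
    intro n
    by_cases h : G ≤ n
    · obtain ⟨q, hq⟩ := exists_weight d D hd hc n (by rw [← hG]; exact h)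
      exact ⟨q, fun _ => hq⟩
    · exact ⟨(0,0), fun h' => absurd h' h⟩
  choose q hq using hw
  set l := s - 1
  set m := s + 2 * G
  set P : Finset (ℕ × ℕ) := Icc G l ×ˢ Icc G m with hP
  set R : Finset (ℕ × ℕ) := (range (l*s+m+1) ×ˢ range d).filter (fun t => d * t.1 + D * t.2 ≤ l*s+m)
    with hR
  have hRcard : #R ≤ l*s+m+1 := by
    have : #R ≤ #(range (l*s+m+1)) := by
      apply Finset.card_le_card_of_injOn (fun t => d * t.1 + D * t.2)
      · intro t ht
        simp only [hR, mem_product, mem_range, coe_filter, Set.mem_ofPred_eq] at ht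
        simp only [coe_range, Set.mem_Iio]; omega
      · intro t ht t' ht' h
        simp only [hR, mem_product, mem_range, coe_filter, Set.mem_ofPred_eq] at ht ht'
        have := weight_inj d D hc ht.1.2 ht'.1.2 h
        exact Prod.ext this.1 this.2
    simpa using this
  have hPcard : #P = (s - G) * (s + G + 1) := by
    rw [hP, card_product, Nat.card_Icc, Nat.card_Icc]
    congr 1 <;> omega
  have hlt : #R < #P := by
    refine lt_of_le_of_lt hRcard ?_
    rw [hPcard]
    obtain ⟨t, rfl⟩ : ∃ t, s = t + (G^2+3*G+2) := ⟨s - (G^2+3*G+2), by omega⟩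
    have e1 : l = t + (G^2+3*G+1) := by omega
    have e2 : t + (G^2+3*G+2) - G = t + (G^2+2*G+2) := by omega
    have e3 : m = t + (G^2+3*G+2) + 2 * G := rfl
    rw [e1, e2, e3]
    nlinarith
  -- linear system
  let Lf : (P → K) →ₗ[K] (R → K) :=
    { toFun := fun c t => ∑ z : P, c z *
        (phi f d ((q z.1.1).1 * s + (q z.1.2).1) ((q z.1.1).2 * s + (q z.1.2).2) t.1.2).coeff t.1.1
      map_add' := by intro a b; ext t; simp [add_mul, sum_add_distrib]
      map_smul' := by intro a b; ext t; simp [mul_sum, mul_assoc] }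
  have hker : LinearMap.ker Lf ≠ ⊥ := by
    apply LinearMap.ker_ne_bot_of_finrank_lt
    simpa using hlt
  obtain ⟨c, hcker, hcne⟩ := (Submodule.ne_bot_iff _).1 hker
  have hc0 : ∀ k ∈ range d, ∑ z : P, C (c z) *
        phi f d ((q z.1.1).1 * s + (q z.1.2).1) ((q z.1.1).2 * s + (q z.1.2).2) k = 0 := by
    intro k hk
    ext a
    simp only [finsetSum_coeff, coeff_C_mul, coeff_zero]
    by_cases ha : d * a + D * k ≤ l*s+m
    · have hmem : (a, k) ∈ R := by
        simp only [hR, mem_filter, mem_product, mem_range]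
        refine ⟨⟨?_, mem_range.1 hk⟩, ha⟩
        nlinarith [Nat.zero_le (D*k)]
      have := congrFun (LinearMap.mem_ker.1 hcker) ⟨(a,k), hmem⟩
      simpa [Lf] using this
    · apply Finset.sum_eq_zero
      rintro ⟨⟨n, n'⟩, hz⟩ -
      simp only [hP, mem_product, mem_Icc] at hz
      simp only
      by_cases he : ((q n).2 * s + (q n').2) % d = k
      · have h1 := phi_natDegree f hf0 d ((q n).1 * s + (q n').1) _ k he
        rw [coeff_eq_zero_of_natDegree_lt, mul_zero]
        by_contra hcon
        push Not at hcon
        have h2 := hq n hz.1.1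
        have h3 := hq n' hz.2.1
        have h4 : d * ((q n).1 * s + (q n').1) + D * ((q n).2 * s + (q n').2) = n * s + n' := by
          calc _ = (d * (q n).1 + D * (q n).2) * s + (d * (q n').1 + D * (q n').2) := by ring
            _ = _ := by rw [h2.2, h3.2]
        have h5 : d * a ≤ d * (phi f d ((q n).1 * s + (q n').1) ((q n).2 * s + (q n').2) k).natDegree :=
          Nat.mul_le_mul_left _ hcon
        have h6 : n * s + n' ≤ l * s + m := by
          have := Nat.mul_le_mul_right s hz.1.2
          omega
        rw [← hD, h4] at h1
        omega
      · simp [phi, he]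
  -- auxiliary polynomial
  let F : ℕ → K[X] := fun k => ∑ z : P, C (c z ^ s) *
        phi f d ((q z.1.1).1 + (q z.1.2).1 * s) ((q z.1.1).2 + (q z.1.2).2 * s) k
  have hwt : ∀ z : P, d * ((q z.1.1).1 + (q z.1.2).1 * s) + D * ((q z.1.1).2 + (q z.1.2).2 * s)
      = z.1.1 + z.1.2 * s := by
    rintro ⟨⟨n, n'⟩, hz⟩
    simp only [hP, mem_product, mem_Icc] at hz
    have h2 := (hq n hz.1.1).2
    have h3 := (hq n' hz.2.1).2
    simp only
    calc _ = (d * (q n).1 + D * (q n).2) + (d * (q n').1 + D * (q n').2) * s := by ring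
      _ = _ := by rw [h2, h3]
  obtain ⟨z0, hz0⟩ : ∃ z, c z ≠ 0 := by
    by_contra h; push Not at h; exact hcne (funext h)
  set k0 := ((q z0.1.1).2 + (q z0.1.2).2 * s) % d with hk0
  have hF0 : F k0 ≠ 0 := by
    have hdeg := degree_sum_eq_of_disjoint (fun z : P => C (c z ^ s) *
        phi f d ((q z.1.1).1 + (q z.1.2).1 * s) ((q z.1.1).2 + (q z.1.2).2 * s) k0) univ ?_
    · intro h0
      have h1 : (F k0).degree = ⊥ := by rw [h0, degree_zero]
      have h2 := Finset.le_sup (f := fun z : P => (C (c z ^ s) *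
        phi f d ((q z.1.1).1 + (q z.1.2).1 * s) ((q z.1.1).2 + (q z.1.2).2 * s) k0).degree)
        (mem_univ z0)
      rw [← hdeg] at h2
      have h3 : (F k0).degree = (∑ z : P, C (c z ^ s) *
        phi f d ((q z.1.1).1 + (q z.1.2).1 * s) ((q z.1.1).2 + (q z.1.2).2 * s) k0).degree := rfl
      rw [← h3, h1, le_bot_iff, degree_eq_bot] at h2
      have : phi f d ((q z0.1.1).1 + (q z0.1.2).1 * s) ((q z0.1.1).2 + (q z0.1.2).2 * s) k0 ≠ 0 := by
        simp only [phi, ← hk0, if_true]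
        exact mul_ne_zero (pow_ne_zero _ X_ne_zero) (pow_ne_zero _ hf0)
      exact mul_ne_zero (C_ne_zero.2 (pow_ne_zero _ hz0)) this h2
    · intro z hz z' hz' hne
      simp only [mem_univ, true_and, Set.mem_ofPred_eq] at hz hz'
      have key : ∀ z : P, C (c z ^ s) * phi f d ((q z.1.1).1 + (q z.1.2).1 * s)
          ((q z.1.1).2 + (q z.1.2).2 * s) k0 ≠ 0 →
          d * (C (c z ^ s) * phi f d ((q z.1.1).1 + (q z.1.2).1 * s)
          ((q z.1.1).2 + (q z.1.2).2 * s) k0).natDegree + D * k0 = z.1.1 + z.1.2 * s := by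
        intro z hz
        have ha : c z ^ s ≠ 0 := by
          intro h; rw [h] at hz; simp at hz
        have hb : ((q z.1.1).2 + (q z.1.2).2 * s) % d = k0 := by
          by_contra h; simp [phi, h] at hz
        rw [natDegree_C_mul ha, phi_natDegree f hf0 d _ _ _ hb, hwt]
      simp only [Function.onFun, Function.comp]
      intro hdd
      have h1 := key z hz
      have h2 := key z' hz'
      rw [natDegree_eq_natDegree hdd, h2] at h1
      apply hne
      obtain ⟨⟨n, n'⟩, hz1⟩ := z
      obtain ⟨⟨v, v'⟩, hz2⟩ := z'
      simp only [hP, mem_product, mem_Icc] at hz1 hz2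
      simp only at h1
      have hn : n < s := by omega
      have hv : v < s := by omega
      have e1 : n = v := by
        have := congrArg (· % s) h1
        simpa [Nat.add_mul_mod_self_right, Nat.mod_eq_of_lt hn, Nat.mod_eq_of_lt hv] using this.symm
      subst e1
      have e2 : n' = v' := Nat.eq_of_mul_eq_mul_right (show 0 < s by omega) (by omega)
      subst e2
      rfl
  have hFdeg : d * (F k0).natDegree ≤ l + m * s := by
    have : (F k0).natDegree ≤ (l + m * s) / d := by
      apply natDegree_sum_le_of_forall_le
      intro z _
      refine (natDegree_C_mul_le _ _).trans ?_
      by_cases hb : ((q z.1.1).2 + (q z.1.2).2 * s) % d = k0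
      · rw [Nat.le_div_iff_mul_le hd, mul_comm]
        have h1 := phi_natDegree f hf0 d ((q z.1.1).1 + (q z.1.2).1 * s) _ _ hb
        rw [hwt] at h1
        obtain ⟨⟨n, n'⟩, hz1⟩ := z
        simp only [hP, mem_product, mem_Icc] at hz1
        simp only at h1 ⊢
        have := Nat.mul_le_mul_right s hz1.2.2
        omega
      · simp [phi, hb]
    calc _ ≤ d * ((l + m * s) / d) := Nat.mul_le_mul_left _ this
      _ ≤ _ := Nat.mul_div_le _ _
  -- vanishing
  have hvan : ∀ x y : K, y ^ d = f.eval x → ∑ k ∈ range d, (F k).eval x * y ^ k = 0 := by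
    intro x y hy
    have h1 : ∑ k ∈ range d, (F k).eval x * y ^ k = ∑ z : P, c z ^ s *
        (x ^ ((q z.1.1).1 + (q z.1.2).1 * s) * y ^ ((q z.1.1).2 + (q z.1.2).2 * s)) := by
      simp only [F, eval_finsetSum, eval_mul, eval_C, sum_mul]
      rw [sum_comm]
      refine sum_congr rfl fun z _ => ?_
      rw [← phi_eval f d _ _ hd x y hy, mul_sum]
      exact sum_congr rfl fun k _ => by ring
    have h2 : ∑ z : P, c z *
        (x ^ ((q z.1.1).1 * s + (q z.1.2).1) * y ^ ((q z.1.1).2 * s + (q z.1.2).2)) = 0 := by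
      have : ∑ k ∈ range d, (∑ z : P, C (c z) *
        phi f d ((q z.1.1).1 * s + (q z.1.2).1) ((q z.1.1).2 * s + (q z.1.2).2) k).eval x * y ^ k = 0 :=
        sum_eq_zero fun k hk => by rw [hc0 k hk]; simp
      rw [← this]
      simp only [eval_finsetSum, eval_mul, eval_C, sum_mul]
      rw [sum_comm]
      refine sum_congr rfl fun z _ => ?_
      rw [← phi_eval f d _ _ hd x y hy, mul_sum]
      exact sum_congr rfl fun k _ => by ring
    have hQ : ∀ w : K, (w ^ s) ^ s = w := by
      intro w
      rw [← pow_mul, ← sq, ← hK, FiniteField.pow_card]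
    have h3 : (∑ k ∈ range d, (F k).eval x * y ^ k) ^ s = 0 := by
      rw [h1, ← h2, hs, sum_pow_char_pow pp nn]
      refine sum_congr rfl fun z _ => ?_
      rw [← hs]
      simp only [mul_pow, pow_add, pow_mul, hQ]
    exact pow_eq_zero_iff (by omega) |>.1 h3
  -- count
  have hsub : (univ.filter fun x : K => f.eval x ≠ 0 ∧ ∃ y, y ^ d = f.eval x).val ⊆ (F k0).roots := by
    intro x hx
    rw [mem_val, mem_filter] at hx
    obtain ⟨-, hx0, y, hy⟩ := hx
    rw [mem_roots hF0, IsRoot]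
    have hy0 : y ≠ 0 := by
      rintro rfl; rw [zero_pow hd.ne'] at hy; exact hx0 hy.symm
    obtain ⟨g, hg⟩ := IsCyclic.exists_generator (α := Kˣ)
    have hordg : orderOf g = s ^ 2 - 1 := by
      rw [orderOf_eq_card_of_forall_mem_zpowers hg, Nat.card_eq_fintype_card, Fintype.card_units, hK]
    obtain ⟨e, he⟩ := hdK
    have hs2 : 2 ≤ s := by omega
    have hpos : 0 < s ^ 2 - 1 := by
      have : 2 ^ 2 ≤ s ^ 2 := Nat.pow_le_pow_left hs2 2
      omega
    have he0 : e ≠ 0 := by rintro rfl; omega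
    have hζ : orderOf (g ^ e) = d := by
      rw [orderOf_pow_of_dvd he0 (by rw [hordg, he]; exact dvd_mul_left _ _), hordg, he,
        Nat.mul_div_cancel _ (Nat.pos_of_ne_zero he0)]
    let p : K[X] := ∑ k ∈ range d, C ((F k).eval x) * X ^ k
    have hp : p = 0 := by
      apply eq_zero_of_natDegree_lt_card_of_eval_eq_zero p
        (f := fun i : Fin d => (((g ^ e) ^ (i : ℕ) : Kˣ) : K) * y)
      · intro i j hij
        have h1 : (((g ^ e) ^ (i : ℕ) : Kˣ) : K) = (((g ^ e) ^ (j : ℕ) : Kˣ) : K) :=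
          mul_right_cancel₀ hy0 hij
        have h2 := Units.ext h1
        exact Fin.ext (pow_injOn_Iio_orderOf (by simp [hζ]) (by simp [hζ]) h2)
      · intro i
        simp only [p, eval_finsetSum, eval_mul, eval_C, eval_pow, eval_X]
        apply hvan x
        rw [mul_pow, hy, ← Units.val_pow_eq_pow_val, ← pow_mul, mul_comm (i:ℕ) d, pow_mul]
        have h9 : (g ^ e) ^ d = 1 := by
          have := pow_orderOf_eq_one (g ^ e)
          rwa [hζ] at this
        rw [h9]; simp
      · rw [Fintype.card_fin]
        refine lt_of_le_of_lt (natDegree_sum_le_of_forall_le (n := d - 1) _ _ ?_) (by omega)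
        intro k hk
        refine (natDegree_C_mul_X_pow_le _ _).trans ?_
        have := mem_range.1 hk; omega
    have hk0d : k0 ∈ range d := mem_range.2 (Nat.mod_lt _ hd)
    have := congrArg (fun r : K[X] => r.coeff k0) hp
    simpa [p, finsetSum_coeff, coeff_C_mul, coeff_X_pow, Nat.mod_lt _ hd, hk0d, mem_range.1 hk0d]
      using this
  have hcnt := card_le_degree_of_subset_roots hsub
  calc _ ≤ d * (F k0).natDegree := Nat.mul_le_mul_left _ hcnt
    _ ≤ l + m * s := hFdeg
    _ ≤ _ := by
      have : l ≤ s := by omega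
      have e3 : m = s + 2 * G := rfl
      rw [e3]; nlinarith
end TT

namespace TT
open Finset Polynomial

theorem charsum_stepanov {K : Type*} [Field K] [Fintype K] [DecidableEq K] (pp nn : ℕ) [ExpChar K pp]
    (s : ℕ) (hs : s = pp ^ nn)
    (hK : Fintype.card K = s ^ 2) (d : ℕ) (hd : 0 < d) (hdK : d ∣ s ^ 2 - 1) (f : K[X])
    (hc : Nat.Coprime f.natDegree d) (hf0 : f ≠ 0) (G : ℕ) (hG : G = (d - 1) * f.natDegree)
    (hsG : G ^ 2 + 3 * G + 1 < s) (ψ : MulChar K ℂ) (hψ : ψ ^ d = 1) (hψ1 : ψ ≠ 1) :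
    ‖∑ x : K, ψ (f.eval x)‖ ≤ (2 * G + 1) * s + f.natDegree := by
  obtain ⟨g, hg⟩ := IsCyclic.exists_generator (α := Kˣ)
  have hlg : ∀ y : K, ∃ j : ℕ, y ≠ 0 → ((g ^ j : Kˣ) : K) = y := by
    intro y
    by_cases h : y = 0
    · exact ⟨0, fun h' => absurd h h'⟩
    · obtain ⟨j, hj⟩ := (Submonoid.mem_powers_iff _ _).1 
        ((mem_powers_iff_mem_zpowers (x := g)).2 (hg (Units.mk0 y h)))
      refine ⟨j, fun _ => ?_⟩
      rw [hj]; rfl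
  choose lg hlg using hlg
  set ζ : ℂ := ψ (g : K) with hζ
  have hζd : ζ ^ d = 1 := by
    rw [hζ, ← MulChar.pow_apply_coe, hψ, MulChar.one_apply_coe]
  have hζ1 : ζ ≠ 1 := by
    intro h
    apply hψ1
    ext a
    obtain ⟨j, hj⟩ := (Submonoid.mem_powers_iff _ _).1 
        ((mem_powers_iff_mem_zpowers (x := g)).2 (hg a))
    rw [← hj, Units.val_pow_eq_pow_val, map_pow, ← hζ, h, MulChar.one_apply]
    · simp
    · exact (g.isUnit.pow j)
  have hζn : ‖ζ‖ = 1 := Complex.norm_eq_one_of_pow_eq_one hζd hd.ne'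
  let A : Finset K := univ.filter (fun x => f.eval x ≠ 0)
  let Z : ℕ → Finset K := fun i => A.filter (fun x => lg (f.eval x) % d = i)
  have hsum : ∑ x : K, ψ (f.eval x) = ∑ i ∈ range d, ζ ^ i * (#(Z i) : ℂ) := by
    have h1 : ∑ x : K, ψ (f.eval x) = ∑ x ∈ A, ζ ^ (lg (f.eval x) % d) := by
      rw [Finset.sum_filter]
      refine sum_congr rfl fun x _ => ?_
      split_ifs with h
      · conv_lhs => rw [← hlg _ h]
        rw [Units.val_pow_eq_pow_val, map_pow, ← hζ]
        conv_lhs => rw [← Nat.div_add_mod (lg (eval x f)) d, pow_add, pow_mul, hζd, one_pow, one_mul]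
      · push Not at h
        rw [h, MulChar.map_zero]
    rw [h1, ← Finset.sum_fiberwise_of_maps_to (t := range d) (g := fun x => lg (f.eval x) % d)]
    · refine sum_congr rfl fun i _ => ?_
      rw [sum_congr rfl (g := fun _ => ζ ^ i)]
      · rw [sum_const, nsmul_eq_mul, mul_comm]
      · intro x hx
        rw [(mem_filter.1 hx).2]
    · intro x _
      exact mem_range.2 (Nat.mod_lt _ hd)
  have hcardA : (#A : ℝ) = ∑ i ∈ range d, (#(Z i) : ℝ) := by
    rw [← Nat.cast_sum, ← Finset.card_eq_sum_card_fiberwise]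
    intro x _
    simpa using (Nat.mod_lt _ hd)
  have hA : (s:ℝ) ^ 2 ≤ #A + f.natDegree := by
    have h1 : #A + #(univ.filter (fun x : K => ¬ f.eval x ≠ 0)) = s ^ 2 := by
      rw [Finset.card_filter_add_card_filter_not, ← hK, Finset.card_univ]
    have h2 : #(univ.filter (fun x : K => ¬ f.eval x ≠ 0)) ≤ f.natDegree := by
      apply card_le_degree_of_subset_roots
      intro x hx
      rw [mem_val, mem_filter] at hx
      rw [mem_roots hf0]
      simpa using hx.2
    have : s ^ 2 ≤ #A + f.natDegree := by omega
    exact_mod_cast this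
  have hZ : ∀ i, (d : ℝ) * #(Z i) ≤ s ^ 2 + (2 * G + 1) * s := by
    intro i
    have h0 : ((g ^ i : Kˣ) : K)⁻¹ ≠ 0 := inv_ne_zero (Units.ne_zero _)
    have hdeg : (C ((g ^ i : Kˣ) : K)⁻¹ * f).natDegree = f.natDegree := natDegree_C_mul h0
    have h1 := stepanov pp nn s hs hK d hd hdK (C ((g ^ i : Kˣ) : K)⁻¹ * f) (by rwa [hdeg])
      (mul_ne_zero (C_ne_zero.2 h0) hf0) G (by rwa [hdeg]) hsG
    have h2 : #(Z i) ≤ #{x : K | (C ((g ^ i : Kˣ) : K)⁻¹ * f).eval x ≠ 0 ∧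
        ∃ y, y ^ d = (C ((g ^ i : Kˣ) : K)⁻¹ * f).eval x} := by
      apply card_le_card
      intro x hx
      simp only [Z, A, mem_filter, mem_univ, true_and] at hx ⊢
      rw [eval_mul, eval_C]
      refine ⟨mul_ne_zero h0 hx.1, ((g ^ (lg (f.eval x) / d) : Kˣ) : K), ?_⟩
      rw [eq_inv_mul_iff_mul_eq₀ (Units.ne_zero _)]
      conv_rhs => rw [← hlg _ hx.1]
      rw [← Units.val_pow_eq_pow_val, ← Units.val_mul, ← pow_mul, ← pow_add]
      congr 2
      conv_rhs => rw [← Nat.div_add_mod (lg (eval x f)) d, hx.2]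
      ring
    have h3 := (Nat.mul_le_mul_left d h2).trans h1
    exact_mod_cast h3
  set B : ℝ := (s ^ 2 + (2 * G + 1) * s) / d with hB
  have hd' : (0:ℝ) < d := by exact_mod_cast hd
  have hZB : ∀ i, (#(Z i) : ℝ) ≤ B := by
    intro i
    rw [hB, le_div_iff₀ hd', mul_comm]; exact hZ i
  have hgeom : ∑ i ∈ range d, ζ ^ i = 0 := by
    have := mul_geom_sum ζ d
    rw [hζd, sub_self, mul_eq_zero] at this
    rcases this with h | h
    · exact absurd (sub_eq_zero.1 h) hζ1
    · exact h
  have h5 : ∑ x : K, ψ (f.eval x) = ∑ i ∈ range d, ζ ^ i * ((#(Z i) : ℂ) - B) := by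
    simp only [mul_sub, sum_sub_distrib, ← sum_mul, hgeom, zero_mul, sub_zero]
    exact hsum
  rw [h5]
  calc _ ≤ ∑ i ∈ range d, ‖ζ ^ i * ((#(Z i) : ℂ) - B)‖ := norm_sum_le _ _
    _ = ∑ i ∈ range d, (B - #(Z i)) := by
      refine sum_congr rfl fun i _ => ?_
      rw [norm_mul, norm_pow, hζn, one_pow, one_mul]
      have : ((#(Z i) : ℂ) - B) = (((#(Z i) : ℝ) - B : ℝ) : ℂ) := by push_cast; rfl
      rw [this, Complex.norm_real, Real.norm_eq_abs, abs_of_nonpos (sub_nonpos.2 (hZB i))]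
      ring
    _ = d * B - #A := by
      rw [sum_sub_distrib, ← hcardA]; simp
    _ ≤ _ := by
      rw [hB, mul_div_cancel₀ _ hd'.ne']
      linarith
end TT

namespace TT
open Finset Polynomial UniqueFactorizationMonoid

set_option linter.unusedSectionVars false
section Lfun
variable {F : Type*} [Field F] [Fintype F] [DecidableEq F]

lemma mon_finite (n : ℕ) : {p : F[X] | p.Monic ∧ p.natDegree = n}.Finite := by
  have : Finite (degreeLT F n) := Finite.of_equiv _ (degreeLTEquiv F n).symm.toEquiv
  exact Set.finite_coe_iff.1 (Finite.of_equiv _ (monicEquivDegreeLT n).symm)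

noncomputable def mon (F : Type*) [Field F] [Fintype F] [DecidableEq F] (n : ℕ) : Finset F[X] := (mon_finite (F := F) n).toFinset

lemma mem_mon {n : ℕ} {p : F[X]} : p ∈ mon F n ↔ p.Monic ∧ p.natDegree = n := by
  simp [mon]

open Classical in
noncomputable def irr (F : Type*) [Field F] [Fintype F] [DecidableEq F] (n : ℕ) : Finset F[X] := (mon F n).filter Irreducible

lemma mem_irr {n : ℕ} {p : F[X]} : p ∈ irr F n ↔ p.Monic ∧ p.natDegree = n ∧ Irreducible p := by
  simp [irr, mem_mon, and_assoc]

open Classical in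
lemma pow_dvd_iff_count {g P : F[X]} (hg : g ≠ 0) (hP : P.Monic) (hi : Irreducible P) (j : ℕ) :
    P ^ j ∣ g ↔ j ≤ (normalizedFactors g).count P := by
  rw [pow_dvd_iff_le_emultiplicity, emultiplicity_eq_count_normalizedFactors hi hg,
    hP.normalize_eq_self]
  exact Nat.cast_le

open Classical in
lemma deg_formula {n : ℕ} {g : F[X]} (hg : g ∈ mon F n) :
    ∑ t ∈ Icc 1 n, ∑ P ∈ irr F t, ∑ j ∈ Icc 1 n, (if P ^ j ∣ g then t else 0) = n := by
  obtain ⟨hm, hn⟩ := mem_mon.1 hg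
  have hg0 := hm.ne_zero
  have hfac : ∀ P ∈ normalizedFactors g, P.Monic ∧ Irreducible P ∧ P.natDegree ∈ Icc 1 n := by
    intro P hP
    have hi := irreducible_of_normalized_factor P hP
    have h1 := normalize_normalized_factor P hP
    refine ⟨?_, hi, mem_Icc.2 ⟨hi.natDegree_pos, ?_⟩⟩
    · rw [← h1]; exact monic_normalize hi.ne_zero
    · rw [← hn]; exact natDegree_le_of_dvd (dvd_of_mem_normalizedFactors hP) hg0
  have h1 : ∀ t ∈ Icc 1 n, ∀ P ∈ irr F t, ∑ j ∈ Icc 1 n, (if P ^ j ∣ g then t else 0) =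
      (normalizedFactors g).count P * P.natDegree := by
    intro t ht P hP
    obtain ⟨hPm, hPt, hPi⟩ := mem_irr.1 hP
    rw [← sum_filter, sum_const, smul_eq_mul, hPt]
    congr 1
    have : (Icc 1 n).filter (fun j => P ^ j ∣ g) = Icc 1 ((normalizedFactors g).count P) := by
      ext j
      simp only [mem_filter, mem_Icc, pow_dvd_iff_count hg0 hPm hPi]
      refine ⟨fun h => ⟨h.1.1, h.2⟩, fun h => ⟨⟨h.1, ?_⟩, h.2⟩⟩
      have h2 := (pow_dvd_iff_count hg0 hPm hPi j).2 h.2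
      have h3 := natDegree_le_of_dvd h2 hg0
      rw [natDegree_pow, hn, hPt] at h3
      have := (mem_Icc.1 ht).1
      nlinarith
    rw [this]; simp
  rw [sum_congr rfl fun t ht => sum_congr rfl (h1 t ht)]
  have h2 : n = ∑ P ∈ (normalizedFactors g).toFinset, (normalizedFactors g).count P * P.natDegree := by
    have h3 : (normalizedFactors g).prod = g := by
      rw [prod_normalizedFactors_eq hg0, hm.normalize_eq_self]
    conv_lhs => rw [← hn, ← h3]
    rw [natDegree_multiset_prod_of_monic _ (fun P hP => (hfac P hP).1), Finset.sum_multiset_map_count]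
    simp
  conv_rhs => rw [h2]
  rw [← Finset.sum_fiberwise_of_maps_to (s := (normalizedFactors g).toFinset) (t := Icc 1 n) (g := natDegree)
    (fun P hP => (hfac P (Multiset.mem_toFinset.1 hP)).2.2)]
  refine sum_congr rfl fun t ht => ?_
  symm
  apply Finset.sum_subset
  · intro P hP
    rw [mem_filter, Multiset.mem_toFinset] at hP
    have := hfac P hP.1
    exact mem_irr.2 ⟨this.1, hP.2, this.2.1⟩
  · intro P hP hP'
    have : P ∉ normalizedFactors g := by
      intro h
      exact hP' (mem_filter.2 ⟨Multiset.mem_toFinset.2 h, (mem_irr.1 hP).2.1⟩)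
    rw [Multiset.count_eq_zero_of_notMem this, zero_mul]

variable {ι : Type*} [Fintype ι] (χ : MulChar F ℂ) (b : ι → F) (e : ι → ℕ)

noncomputable def lam (g : F[X]) : ℂ := ∏ i, χ (g.eval (b i)) ^ e i

lemma lam_mul (g h : F[X]) : lam χ b e (g * h) = lam χ b e g * lam χ b e h := by
  simp [lam, ← prod_mul_distrib, mul_pow]

lemma lam_one : lam χ b e 1 = 1 := by simp [lam]

lemma lam_pow (g : F[X]) (j : ℕ) : lam χ b e (g ^ j) = lam χ b e g ^ j := by
  induction j with
  | zero => simp [lam_one]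
  | succ j ih => rw [pow_succ, lam_mul, ih, pow_succ]

noncomputable def cc (n : ℕ) : ℂ := ∑ g ∈ mon F n, lam χ b e g

lemma mon_zero : mon F 0 = {1} := by
  ext p
  simp only [mem_mon, mem_singleton]
  constructor
  · rintro ⟨h, h0⟩; exact h.natDegree_eq_zero.1 h0
  · rintro rfl; simp

lemma cc_zero : cc χ b e 0 = 1 := by
  simp [cc, mon_zero, lam_one]

lemma cc_vanish (γ : Fˣ) (hγ : χ γ ^ (∑ i, e i) ≠ 1) (n : ℕ) (hn : Fintype.card ι ≤ n) :
    cc χ b e n = 0 := by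
  classical
  let W : F[X] := X ^ (n - Fintype.card ι) * ∏ i, (X - C (b i))
  have hWm : W.Monic := (monic_X_pow _).mul (monic_prod_of_monic _ _ fun i _ => monic_X_sub_C _)
  have hWd : W.natDegree = n := by
    rw [Monic.natDegree_mul (monic_X_pow _) (monic_prod_of_monic _ _ fun i _ => monic_X_sub_C _),
      natDegree_X_pow, natDegree_prod_of_monic _ _ (fun i _ => monic_X_sub_C _)]
    simp; omega
  have hWe : ∀ i, W.eval (b i) = 0 := by
    intro i
    simp only [W, eval_mul, eval_prod]
    rw [prod_eq_zero (mem_univ i) (by simp), mul_zero]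
  have hmem : ∀ γ : F, γ ≠ 0 → ∀ g ∈ mon F n, C γ * g + C (1 - γ) * W ∈ mon F n := by
    intro γ hγ g hg
    obtain ⟨hm, hd⟩ := mem_mon.1 hg
    have hle : (C γ * g + C (1 - γ) * W).natDegree ≤ n := by
      refine (natDegree_add_le _ _).trans (max_le ?_ ?_)
      · exact (natDegree_C_mul_le _ _).trans hd.le
      · exact (natDegree_C_mul_le _ _).trans hWd.le
    have hcoeff : (C γ * g + C (1 - γ) * W).coeff n = 1 := by
      rw [coeff_add, coeff_C_mul, coeff_C_mul]
      have h1 : g.coeff n = 1 := by rw [← hd]; exact hm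
      have h2 : W.coeff n = 1 := by rw [← hWd]; exact hWm
      rw [h1, h2]; ring
    have hmm := monic_of_natDegree_le_of_coeff_eq_one n hle hcoeff
    refine mem_mon.2 ⟨hmm, le_antisymm hle (le_natDegree_of_ne_zero (by rw [hcoeff]; exact one_ne_zero))⟩
  have key : cc χ b e n = χ γ ^ (∑ i, e i) * cc χ b e n := by
    unfold cc
    rw [mul_sum]
    symm
    apply sum_bij' (fun g _ => C (γ : F) * g + C (1 - (γ : F)) * W)
      (fun g _ => C ((γ⁻¹ : Fˣ) : F) * g + C (1 - ((γ⁻¹ : Fˣ) : F)) * W)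
    · intro g hg; exact hmem _ (Units.ne_zero _) g hg
    · intro g hg; exact hmem _ (Units.ne_zero _) g hg
    · intro g _
      have : C ((γ⁻¹ : Fˣ) : F) * C (γ : F) = 1 := by rw [← C_mul]; simp
      simp only [C_sub, C_1]
      linear_combination (g - W) * this
    · intro g _
      have : C ((γ⁻¹ : Fˣ) : F) * C (γ : F) = 1 := by rw [← C_mul]; simp
      simp only [C_sub, C_1]
      linear_combination (g - W) * this
    · intro g _
      simp only [lam, eval_add, eval_mul, eval_C, hWe, mul_zero, add_zero, map_mul, mul_pow,
        prod_mul_distrib, prod_pow_eq_pow_sum]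
  have : (1 - χ γ ^ (∑ i, e i)) * cc χ b e n = 0 := by linear_combination key
  rcases mul_eq_zero.1 this with h | h
  · exact absurd (sub_eq_zero.1 h).symm hγ
  · exact h

/-- S'_k -/
noncomputable def SS (n k : ℕ) : ℂ := ∑ t ∈ Icc 1 n, ∑ P ∈ irr F t, ∑ j ∈ Icc 1 n,
  if t * j = k then t * lam χ b e P ^ j else 0

open Classical in
lemma sum_dvd {n t j : ℕ} {P : F[X]} (hP : P ∈ irr F t) :
    ∑ g ∈ mon F n, (if P ^ j ∣ g then lam χ b e g else 0) =
      if t * j ≤ n then lam χ b e P ^ j * cc χ b e (n - t * j) else 0 := by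
  obtain ⟨hPm, hPt, hPi⟩ := mem_irr.1 hP
  have hPj : (P ^ j).Monic := hPm.pow j
  have hdeg : (P ^ j).natDegree = t * j := by rw [natDegree_pow, hPt, mul_comm]
  rw [← sum_filter]
  split_ifs with h
  · rw [cc, mul_sum]
    symm
    apply sum_bij (fun h _ => P ^ j * h)
    · intro g hg
      obtain ⟨hm, hd⟩ := mem_mon.1 hg
      refine mem_filter.2 ⟨mem_mon.2 ⟨hPj.mul hm, ?_⟩, dvd_mul_right _ _⟩
      rw [hPj.natDegree_mul hm, hdeg, hd]; omega
    · intro g _ g' _ hgg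
      exact mul_left_cancel₀ hPj.ne_zero hgg
    · intro g hg
      obtain ⟨hg1, w, rfl⟩ := mem_filter.1 hg
      obtain ⟨hm, hd⟩ := mem_mon.1 hg1
      have hw := hPj.of_mul_monic_left hm
      refine ⟨w, mem_mon.2 ⟨hw, ?_⟩, rfl⟩
      rw [hPj.natDegree_mul hw, hdeg] at hd; omega
    · intro g _
      rw [lam_mul, lam_pow]
  · apply sum_eq_zero
    intro g hg
    obtain ⟨hg1, hg2⟩ := mem_filter.1 hg
    obtain ⟨hm, hd⟩ := mem_mon.1 hg1
    have := natDegree_le_of_dvd hg2 hm.ne_zero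
    omega

lemma newton (n : ℕ) : (n : ℂ) * cc χ b e n = ∑ k ∈ Icc 1 n, SS χ b e n k * cc χ b e (n - k) := by
  classical
  have h1 : (n : ℂ) * cc χ b e n = ∑ g ∈ mon F n, ∑ t ∈ Icc 1 n, ∑ P ∈ irr F t, ∑ j ∈ Icc 1 n,
      (t : ℂ) * (if P ^ j ∣ g then lam χ b e g else 0) := by
    rw [cc, mul_sum]
    refine sum_congr rfl fun g hg => ?_
    conv_lhs => rw [← deg_formula hg]
    push_cast
    simp only [sum_mul]
    refine sum_congr rfl fun t _ => sum_congr rfl fun P _ => sum_congr rfl fun j _ => ?_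
    split_ifs <;> simp
  rw [h1, sum_comm]
  simp only [SS, sum_mul]
  conv_rhs => rw [sum_comm]
  refine sum_congr rfl fun t ht => ?_
  rw [sum_comm]
  conv_rhs => rw [sum_comm]
  refine sum_congr rfl fun P hP => ?_
  rw [sum_comm]
  conv_rhs => rw [sum_comm]
  refine sum_congr rfl fun j hj => ?_
  rw [← mul_sum, sum_dvd χ b e hP]
  simp only [ite_mul, zero_mul]
  rw [sum_ite_eq]
  have : 1 ≤ t * j := Nat.one_le_iff_ne_zero.2 (mul_ne_zero (by have := (mem_Icc.1 ht).1; omega)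
    (by have := (mem_Icc.1 hj).1; omega))
  simp only [mem_Icc, this, true_and]
  split_ifs
  · ring
  · simp

end Lfun
end TT

namespace TT
open Finset Polynomial
set_option linter.unusedSectionVars false
section
variable {F : Type*} [Field F] [Fintype F] [DecidableEq F]

lemma norm_sub_minpoly {L : Type*} [Field L] [Algebra F L] [FiniteDimensional F L] (b : F) (α : L) :
    Algebra.norm F (algebraMap F L b - α) = ((minpoly F α).eval b) ^
      (Module.finrank F L / (minpoly F α).natDegree) := by
  have hint : IsIntegral F α := IsIntegral.of_finite F α
  let pb := IntermediateField.adjoin.powerBasis hint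
  let E := IntermediateField.adjoin F {α}
  have h1 : algebraMap F L b - α = algebraMap E L (algebraMap F E b - IntermediateField.AdjoinSimple.gen F α) := by
    simp only [map_sub]
    rw [IntermediateField.AdjoinSimple.algebraMap_gen, ← IsScalarTower.algebraMap_apply]
  have hgen : pb.gen = IntermediateField.AdjoinSimple.gen F α := rfl
  have h2 : Algebra.norm F (algebraMap F E b - IntermediateField.AdjoinSimple.gen F α)
      = (minpoly F α).eval b := by
    rw [Algebra.norm_eq_matrix_det pb.basis, map_sub, ← hgen]
    have : Algebra.leftMulMatrix pb.basis (algebraMap F E b) = Matrix.scalar _ b := by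
      rw [AlgHom.commutes]; rfl
    rw [this, ← Matrix.eval_charpoly, charpoly_leftMulMatrix, hgen, IntermediateField.minpoly_gen]
  have h3 : Module.finrank E L = Module.finrank F L / (minpoly F α).natDegree := by
    have := Module.finrank_mul_finrank F E L
    rw [IntermediateField.adjoin.finrank hint] at this
    rw [← this, Nat.mul_div_cancel_left _ (minpoly.natDegree_pos hint)]
  rw [h1, ← Algebra.norm_norm (R := F) (S := E), Algebra.norm_algebraMap, map_pow, h2, h3]

open Classical in
lemma fiber_count {L : Type*} [Field L] [Fintype L] [Algebra F L]
    [FiniteDimensional F L] (P : F[X]) (hPm : P.Monic) (hPi : Irreducible P)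
    (hd : P.natDegree ∣ Module.finrank F L) :
    #(univ.filter fun α : L => minpoly F α = P) = P.natDegree := by
  have hq : Nat.card F ^ (Module.finrank F L) = Fintype.card L := by
    rw [← Module.natCard_eq_pow_finrank, Nat.card_eq_fintype_card]
  have hd := (hPi.natDegree_dvd_iff_dvd_X_pow_card_pow_sub_X).1 hd
  rw [hq] at hd
  have hsp := (FiniteField.isSplittingField_sub L F).splits
  have hne : (X ^ Fintype.card L - X : F[X]) ≠ 0 :=
    FiniteField.X_pow_card_sub_X_ne_zero F Fintype.one_lt_card
  have hne2 : ((X ^ Fintype.card L - X : F[X]).map (algebraMap F L)) ≠ 0 :=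
    (Polynomial.map_ne_zero_iff (algebraMap F L).injective).2 hne
  have hsplit : (P.map (algebraMap F L)).Splits := Splits.of_dvd hsp hne2 (Polynomial.map_dvd _ hd)
  have hsep : P.Separable := PerfectField.separable_of_irreducible hPi
  have h4 := card_rootSet_eq_natDegree (K := L) hsep hsplit
  rw [← h4, ← Set.toFinset_card]
  congr 1
  ext α
  simp only [mem_filter, mem_univ, true_and, Set.mem_toFinset, mem_rootSet]
  constructor
  · rintro rfl; exact ⟨hPm.ne_zero, minpoly.aeval _ _⟩
  · rintro ⟨-, h⟩
    exact (minpoly.eq_of_irreducible_of_monic hPi h hPm).symm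

variable {ι : Type*} [Fintype ι] (χ : MulChar F ℂ) (b : ι → F) (e : ι → ℕ)

lemma SS_eq (n k : ℕ) (hk : 1 ≤ k) (hkn : k ≤ n) {L : Type*} [Field L] [Fintype L] [Algebra F L]
    [FiniteDimensional F L] (hL : Module.finrank F L = k) :
    SS χ b e n k = ∑ α : L, ∏ i, χ (Algebra.norm F (algebraMap F L (b i) - α)) ^ e i := by
  classical
  have h1 : ∀ α : L, ∏ i, χ (Algebra.norm F (algebraMap F L (b i) - α)) ^ e i =
      lam χ b e (minpoly F α) ^ (k / (minpoly F α).natDegree) := by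
    intro α
    simp only [norm_sub_minpoly, hL, lam, ← prod_pow, map_pow]
    refine prod_congr rfl fun i _ => ?_
    rw [← pow_mul, ← pow_mul, mul_comm]
  simp only [h1]
  have hmin : ∀ α : L, minpoly F α ∈ irr F (minpoly F α).natDegree := fun α =>
    mem_irr.2 ⟨minpoly.monic (IsIntegral.of_finite F α), rfl, minpoly.irreducible (IsIntegral.of_finite F α)⟩
  have hdvd : ∀ α : L, (minpoly F α).natDegree ∣ k := fun α => by
    rw [← hL]; exact minpoly.degree_dvd (IsIntegral.of_finite F α)
  have hmem : ∀ α : L, (minpoly F α).natDegree ∈ Icc 1 n := fun α => mem_Icc.2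
    ⟨minpoly.natDegree_pos (IsIntegral.of_finite F α), (Nat.le_of_dvd hk (hdvd α)).trans hkn⟩
  rw [← Finset.sum_fiberwise_of_maps_to (t := Icc 1 n) (g := fun α : L => (minpoly F α).natDegree)
    (fun α _ => hmem α)]
  refine sum_congr rfl fun t ht => ?_
  rw [← Finset.sum_fiberwise_of_maps_to (t := irr F t) (g := fun α : L => minpoly F α)
    (fun α hα => by have := hmin α; rwa [(mem_filter.1 hα).2] at this)]
  refine sum_congr rfl fun P hP => ?_
  obtain ⟨hPm, hPt, hPi⟩ := mem_irr.1 hP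
  have h2 : ∑ α ∈ (univ.filter fun α : L => (minpoly F α).natDegree = t).filter (fun α => minpoly F α = P),
      lam χ b e (minpoly F α) ^ (k / (minpoly F α).natDegree) =
      #(univ.filter fun α : L => minpoly F α = P) * lam χ b e P ^ (k / t) := by
    have : (univ.filter fun α : L => (minpoly F α).natDegree = t).filter (fun α => minpoly F α = P) =
      univ.filter fun α : L => minpoly F α = P := by
      ext α
      simp only [mem_filter, mem_univ, true_and, and_iff_right_iff_imp]
      rintro rfl; exact hPt
    rw [this, ← nsmul_eq_mul, ← sum_const]
    refine sum_congr rfl fun α hα => ?_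
    rw [(mem_filter.1 hα).2, hPt]
  rw [h2]
  have ht1 := (mem_Icc.1 ht).1
  by_cases htk : t ∣ k
  · have h3 : #(univ.filter fun α : L => minpoly F α = P) = t := by
      rw [← hPt]; exact fiber_count P hPm hPi (by rw [hPt, hL]; exact htk)
    rw [h3]
    obtain ⟨j, rfl⟩ := htk
    have hj : j ∈ Icc 1 n := by
      rw [mem_Icc]
      have : j ≠ 0 := by rintro rfl; omega
      exact ⟨by omega, by nlinarith⟩
    rw [sum_eq_single j, if_pos rfl, Nat.mul_div_cancel_left _ ht1]
    · intro j' _ hne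
      rw [if_neg]
      intro h; exact hne (Nat.eq_of_mul_eq_mul_left ht1 h)
    · intro h; exact absurd hj h
  · have h3 : (univ.filter fun α : L => minpoly F α = P) = ∅ := by
      rw [filter_eq_empty_iff]
      rintro α - rfl
      exact htk (hPt ▸ hdvd α)
    rw [h3]
    rw [sum_eq_zero]; · simp
    intro j _
    rw [if_neg]
    rintro rfl
    exact htk (dvd_mul_right _ _)
end
end TT

namespace TT
open Finset Polynomial
set_option linter.unusedSectionVars false

lemma newton_roots (m : ℕ) (c S : ℕ → ℂ) (h0 : c 0 = 1) (hm : ∀ n, m < n → c n = 0)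
    (hN : ∀ n : ℕ, (n : ℂ) * c n = ∑ k ∈ Icc 1 n, S k * c (n - k)) :
    ∃ ω : Fin m → ℂ, ∀ k, 1 ≤ k → S k = - ∑ j, ω j ^ k := by
  classical
  let P : ℂ[X] := X ^ m + ∑ n ∈ range m, C (c (m - n)) * X ^ n
  have hPm : P.Monic := by
    apply monic_X_pow_add
    refine (degree_sum_le _ _).trans_lt ?_
    rw [Finset.sup_lt_iff (by exact WithBot.bot_lt_coe m)]
    intro n hn
    exact (degree_C_mul_X_pow_le _ _).trans_lt (by exact_mod_cast mem_range.1 hn)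
  have hPd : P.natDegree = m := by
    apply natDegree_eq_of_degree_eq_some
    apply (degree_add_eq_left_of_degree_lt _).trans (degree_X_pow m)
    rw [degree_X_pow]
    refine (degree_sum_le _ _).trans_lt ?_
    rw [Finset.sup_lt_iff (by exact WithBot.bot_lt_coe m)]
    intro n hn
    exact (degree_C_mul_X_pow_le _ _).trans_lt (by exact_mod_cast mem_range.1 hn)
  have hcoef : ∀ n ≤ m, P.coeff (m - n) = c n := by
    intro n hn
    simp only [P, coeff_add, coeff_X_pow, finsetSum_coeff, coeff_C_mul]
    rcases Nat.eq_zero_or_pos n with rfl | hn0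
    · rw [sum_eq_zero]
      · simp [h0]
      · intro x hx; have := mem_range.1 hx
        rw [if_neg (by omega)]; simp
    · rw [if_neg (by omega), sum_eq_single (m - n)]
      · rw [if_pos rfl, Nat.sub_sub_self hn]; simp
      · intro x _ hx; rw [if_neg (Ne.symm hx)]; simp
      · intro h; exfalso; apply h; rw [mem_range]; omega
  have hsp : P.Splits := IsAlgClosed.splits P
  have hcard : Multiset.card P.roots = m := by rw [splits_iff_card_roots.1 hsp, hPd]
  obtain ⟨ω, hω⟩ : ∃ ω : Fin m → ℂ, (Finset.univ.val.map ω) = P.roots := by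
    obtain ⟨l, hl⟩ := Quot.exists_rep P.roots
    have hll : l.length = m := by rw [← hcard, ← hl]; rfl
    subst hll
    refine ⟨l.get, ?_⟩
    rw [← hl]
    rw [Fin.univ_val_map, List.ofFn_get]; rfl
  have hes : ∀ n, c n = (-1) ^ n * (Finset.univ.val.map ω).esymm n := by
    intro n
    by_cases hn : n ≤ m
    · rw [← hcoef n hn, hω, coeff_eq_esymm_roots_of_card (by rw [hcard, hPd]) (by rw [hPd]; omega),
        hPm.leadingCoeff, hPd, Nat.sub_sub_self hn, one_mul]
    · rw [hm n (by omega), Multiset.esymm, Multiset.powersetCard_eq_empty]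
      · simp
      · simp; omega
  have hNw : ∀ n : ℕ, (n : ℂ) * c n = - ∑ k ∈ Icc 1 n, (∑ j, ω j ^ k) * c (n - k) := by
    intro n
    have h1 := congrArg (MvPolynomial.aeval ω) (MvPolynomial.mul_esymm_eq_sum (Fin m) ℂ n)
    simp only [map_mul, map_natCast, map_pow, map_neg, map_one, map_sum,
      MvPolynomial.aeval_esymm_eq_multiset_esymm, MvPolynomial.psum, MvPolynomial.aeval_X] at h1
    simp only [← hes] at h1
    have h2 : (n : ℂ) * c n = (-1) ^ n * (n * (Finset.univ.val.map ω).esymm n) := by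
      rw [hes n]; ring
    rw [h2, h1, ← mul_assoc, ← pow_add, Odd.neg_one_pow (by use n; ring), neg_one_mul]
    congr 1
    refine sum_bij' (fun a _ => a.2) (fun k _ => (n - k, k)) ?_ ?_ ?_ ?_ ?_
    · rintro ⟨a, b⟩ h
      simp only [mem_filter, HasAntidiagonal.mem_antidiagonal, mem_Icc] at h ⊢
      omega
    · intro k hk
      simp only [mem_filter, HasAntidiagonal.mem_antidiagonal, mem_Icc] at hk ⊢
      omega
    · rintro ⟨a, b⟩ h
      simp only [mem_filter, HasAntidiagonal.mem_antidiagonal] at h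
      simp only [Prod.mk.injEq, and_true]; omega
    · intro k hk; rfl
    · rintro ⟨a, b⟩ h
      simp only [mem_filter, HasAntidiagonal.mem_antidiagonal] at h
      rw [show n - (a, b).2 = a by simp; omega, mul_comm]
  refine ⟨ω, ?_⟩
  intro k
  induction k using Nat.strong_induction_on with
  | _ k ih =>
    intro hk
    have h1 := (hN k).symm.trans (hNw k)
    rw [← sum_neg_distrib] at h1
    obtain ⟨k, rfl⟩ : ∃ k', k = k' + 1 := ⟨k - 1, by omega⟩
    rw [sum_Icc_succ_top (by omega), sum_Icc_succ_top (by omega)] at h1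
    have h2 : ∑ x ∈ Icc 1 k, S x * c (k + 1 - x) = ∑ x ∈ Icc 1 k, -((∑ j, ω j ^ x) * c (k + 1 - x)) := by
      refine sum_congr rfl fun x hx => ?_
      rw [mem_Icc] at hx
      rw [ih x (by omega) (by omega)]; ring
    rw [h2] at h1
    simpa [h0] using h1

open Filter Topology in
lemma pow_sum_bound {ι : Type*} [Fintype ι] (z : ι → ℂ) (q C : ℝ) (hq : 0 < q) (n0 : ℕ)
    (h : ∀ n, n0 ≤ n → ‖∑ j, z j ^ n‖ ≤ C * q ^ n) (j : ι) : ‖z j‖ ≤ q := by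
  by_contra hlt
  push Not at hlt
  have hw : ∀ i, ∃ w : Circle, z i = ‖z i‖ * (w : ℂ) := by
    intro i
    by_cases hz : z i = 0
    · exact ⟨1, by simp [hz]⟩
    · refine ⟨⟨z i / ‖z i‖, ?_⟩, ?_⟩
      · simp [Submonoid.unitSphere, hz]
      · have : (‖z i‖ : ℂ) ≠ 0 := by simpa using hz
        simp only; field_simp
  choose w hw using hw
  have hcl := mapClusterPt_one_atTop_pow w
  have hnhds : {v : ι → Circle | ∀ i, 1 / 2 < ((v i : Circle) : ℂ).re} ∈ 𝓝 (1 : ι → Circle) := by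
    have ho : IsOpen {v : ι → Circle | ∀ i, 1 / 2 < ((v i : Circle) : ℂ).re} := by
      simp only [Set.ofPred_forall]
      refine isOpen_iInter_of_finite fun i => ?_
      refine isOpen_lt continuous_const ?_
      exact Complex.continuous_re.comp (continuous_subtype_val.comp (continuous_apply i))
    refine ho.mem_nhds ?_
    intro i
    norm_num
  have hfr := hcl.frequently hnhds
  have hlim : Tendsto (fun n : ℕ => (‖z j‖ / q) ^ n) atTop atTop :=
    tendsto_pow_atTop_atTop_of_one_lt ((one_lt_div hq).2 hlt)
  have hev := (hlim.eventually_gt_atTop (2 * C)).and (eventually_ge_atTop n0)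
  obtain ⟨n, hn1, hn2, hn3⟩ := (hfr.and_eventually hev).exists
  have h1 := h n hn3
  have h2 : ‖z j‖ ^ n / 2 ≤ (∑ i, z i ^ n).re := by
    rw [Complex.re_sum]
    have h3 : ∀ i, (z i ^ n).re = ‖z i‖ ^ n * ((w i : ℂ) ^ n).re := by
      intro i
      conv_lhs => rw [hw i, mul_pow, ← Complex.ofReal_pow, Complex.re_ofReal_mul]
    have h4 : ∀ i, 1 / 2 < ((w i : ℂ) ^ n).re := by
      intro i; have := hn1 i; simpa using this
    calc _ ≤ (z j ^ n).re := by
            rw [h3]; have := h4 j; have h5 : 0 ≤ ‖z j‖ ^ n := by positivity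
            nlinarith
      _ ≤ _ := by
        refine single_le_sum (f := fun i => (z i ^ n).re) (fun i _ => ?_) (mem_univ j)
        simp only [h3]; have := h4 i; have h5 : 0 ≤ ‖z i‖ ^ n := by positivity
        nlinarith
  have h5 := (h2.trans (Complex.re_le_norm _)).trans h1
  rw [div_pow, lt_div_iff₀ (by positivity)] at hn2
  linarith
end TT

namespace TT
open Finset Polynomial
set_option linter.unusedSectionVars false

noncomputable def psiN {F L : Type*} [Field F] [Field L] [Algebra F L] [FiniteDimensional F L]
    (χ : MulChar F ℂ) : MulChar L ℂ where
  toMonoidHom := χ.toMonoidHom.comp (Algebra.norm F)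
  map_nonunit' := by
    intro a ha
    rw [isUnit_iff_ne_zero, not_not] at ha
    subst ha
    change χ (Algebra.norm F (0 : L)) = 0
    rw [Algebra.norm_zero, MulChar.map_zero]

lemma psiN_apply {F L : Type*} [Field F] [Field L] [Algebra F L] [FiniteDimensional F L]
    (χ : MulChar F ℂ) (x : L) : psiN χ x = χ (Algebra.norm F x) := rfl

variable {p : ℕ} [Fact p.Prime] {ι : Type*} [Fintype ι]

lemma exists_ext (p : ℕ) [Fact p.Prime] (k : ℕ) (hk : 1 ≤ k) : ∃ (L : Type) (_ : Field L) (_ : Fintype L)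
    (_ : Algebra (ZMod p) L) (_ : FiniteDimensional (ZMod p) L), Module.finrank (ZMod p) L = k :=
  ⟨GaloisField p k, inferInstance, Fintype.ofFinite _, inferInstance, inferInstance,
    GaloisField.finrank p (by omega)⟩

lemma SS_ext_bound (χ : MulChar (ZMod p) ℂ) (hχ : χ ≠ 1) (d : ℕ) (hd : 0 < d) (hχd : χ ^ d = 1)
    (hdp : d ∣ p - 1) (b : ι → ZMod p) (e : ι → ℕ) (hco : Nat.Coprime (∑ i, e i) d)
    (n : ℕ) (hn : 1 ≤ n) (G : ℕ) (hG : G = (d - 1) * ∑ i, e i) (hnG : G ^ 2 + 3 * G + 1 < p ^ n) :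
    ‖SS χ b e (2 * n) (2 * n)‖ ≤ (2 * G + 1 + ∑ i, e i) * (p : ℝ) ^ n := by
  classical
  obtain ⟨L, _, _, _, _, hfr⟩ := exists_ext p (2 * n) (by omega)
  rw [SS_eq χ b e (2 * n) (2 * n) (by omega) le_rfl hfr]
  let f : L[X] := ∏ i, (C (algebraMap (ZMod p) L (b i)) - X) ^ e i
  have hlin : ∀ c : L, (C c - X : L[X]).natDegree = 1 := by
    intro c
    rw [← natDegree_neg, neg_sub, natDegree_X_sub_C]
  have hne : ∀ c : L, (C c - X : L[X]) ≠ 0 := by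
    intro c h
    have := hlin c; rw [h] at this; simp at this
  have hf0 : f ≠ 0 := prod_ne_zero_iff.2 fun i _ => pow_ne_zero _ (hne _)
  have hfd : f.natDegree = ∑ i, e i := by
    rw [natDegree_prod _ _ fun i _ => pow_ne_zero _ (hne _)]
    refine sum_congr rfl fun i _ => ?_
    rw [natDegree_pow, hlin, mul_one]
  have hcard : Fintype.card L = (p ^ n) ^ 2 := by
    rw [← Nat.card_eq_fintype_card, Module.natCard_eq_pow_finrank (K := ZMod p), hfr, Nat.card_zmod, ← pow_mul, mul_comm]
  have : CharP L p := (Algebra.charP_iff (ZMod p) L p).1 inferInstance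
  have : ExpChar L p := ExpChar.prime (Fact.out)
  have hψ1 : psiN (L := L) χ ≠ 1 := by
    intro h
    apply hχ
    ext u
    obtain ⟨x, hx⟩ := FiniteField.norm_surjective (ZMod p) L (u : ZMod p)
    have hx0 : x ≠ 0 := by rintro rfl; rw [Algebra.norm_zero] at hx; exact u.ne_zero hx.symm
    have := congrArg (fun ψ : MulChar L ℂ => ψ x) h
    simp only [psiN_apply, hx] at this
    rw [this, MulChar.one_apply (isUnit_iff_ne_zero.2 hx0), MulChar.one_apply_coe]
  have hψd : psiN (L := L) χ ^ d = 1 := by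
    ext u
    rw [MulChar.pow_apply_coe, psiN_apply, MulChar.one_apply_coe]
    have hu : IsUnit (Algebra.norm (ZMod p) (u : L)) := u.isUnit.map _
    obtain ⟨v, hv⟩ := hu
    rw [← hv, ← MulChar.pow_apply_coe, hχd, MulChar.one_apply_coe]
  have hdiv : d ∣ (p ^ n) ^ 2 - 1 := by
    refine hdp.trans ?_
    rw [← pow_mul]
    simpa using Nat.sub_dvd_pow_sub_pow p 1 (n * 2)
  have key := charsum_stepanov (K := L) p n (p ^ n) rfl hcard d hd hdiv f (hfd ▸ hco) hf0 G
    (hfd ▸ hG) hnG (psiN χ) hψd hψ1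
  have heq : ∀ x : L, psiN χ (f.eval x) = ∏ i, χ (Algebra.norm (ZMod p) (algebraMap (ZMod p) L (b i) - x)) ^ e i := by
    intro x
    simp only [f, eval_prod, eval_pow, eval_sub, eval_C, eval_X, map_prod, map_pow, psiN_apply]
  rw [sum_congr rfl fun x _ => heq x] at key
  refine key.trans ?_
  rw [hfd]
  push_cast
  have h1 : (1 : ℝ) ≤ (p : ℝ) ^ n := one_le_pow₀ (by exact_mod_cast (Fact.out : p.Prime).one_lt.le)
  have h2 : (0 : ℝ) ≤ ∑ i, (e i : ℝ) := by positivity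
  nlinarith

theorem weil (χ : MulChar (ZMod p) ℂ) (hχ : χ ≠ 1) (b : ι → ZMod p) (e : ι → ℕ)
    (hco : Nat.Coprime (∑ i, e i) (orderOf χ)) :
    ‖∑ x, ∏ i, χ (b i - x) ^ e i‖ ≤ Fintype.card ι * Real.sqrt p := by
  classical
  have hp : p.Prime := Fact.out
  set d := orderOf χ with hd
  have hdp : d ∣ p - 1 := by
    have := MulChar.orderOf_dvd_card_sub_one (χ := χ)
    rwa [ZMod.card] at this
  have hd0 : 0 < d := Nat.pos_of_dvd_of_pos hdp (by have := hp.two_le; omega)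
  have hχd : χ ^ d = 1 := pow_orderOf_eq_one χ
  have hne : χ ^ (∑ i, e i) ≠ 1 := by
    intro h
    have h1 := orderOf_dvd_of_pow_eq_one h
    have h2 : orderOf χ = 1 := Nat.Coprime.eq_one_of_dvd hco.symm h1
    exact hχ (orderOf_eq_one_iff.1 h2)
  obtain ⟨γ, hγ⟩ := MulChar.ne_one_iff.1 hne
  rw [MulChar.pow_apply_coe] at hγ
  have hSS : ∀ n k, 1 ≤ k → k ≤ n → SS χ b e n k = SS χ b e k k := by
    intro n k hk hkn
    obtain ⟨L, _, _, _, _, hfr⟩ := exists_ext p k hk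
    rw [SS_eq χ b e n k hk hkn hfr, SS_eq χ b e k k hk le_rfl hfr]
  obtain ⟨ω, hω⟩ := newton_roots (Fintype.card ι) (cc χ b e) (fun k => SS χ b e k k) (cc_zero χ b e)
    (fun n hn => cc_vanish χ b e γ hγ n hn.le) (by
      intro n
      rw [newton]
      refine sum_congr rfl fun k hk => ?_
      rw [mem_Icc] at hk
      rw [hSS n k hk.1 hk.2])
  let G := (d - 1) * ∑ i, e i
  have hpow : ∀ j, ‖ω j ^ 2‖ ≤ p := by
    refine pow_sum_bound (fun j => ω j ^ 2) p (2 * G + 1 + ∑ i, e i) (by exact_mod_cast hp.pos)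
      (G ^ 2 + 3 * G + 2) ?_
    intro n hn
    have h1 := SS_ext_bound χ hχ d hd0 hχd hdp b e hco n (by omega) G rfl
      (by have : n < p ^ n := Nat.lt_pow_self hp.one_lt
          omega)
    have h2 := hω (2 * n) (by omega)
    rw [h2, norm_neg] at h1
    simp only [← pow_mul]
    exact h1
  have hω1 : ∀ j, ‖ω j‖ ≤ Real.sqrt p := by
    intro j
    apply Real.le_sqrt_of_sq_le
    rw [← norm_pow]; exact hpow j
  have h1 := SS_eq χ b e 1 1 le_rfl le_rfl (L := ZMod p) (Module.finrank_self _)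
  have h2 := hω 1 le_rfl
  simp only [h1, Algebra.norm_self, pow_one] at h2
  simp only [Algebra.algebraMap_self, RingHom.id_apply, MonoidHom.id_apply] at h2
  rw [h2, norm_neg]
  refine (norm_sum_le _ _).trans ((sum_le_sum fun j _ => hω1 j).trans ?_)
  simp
end TT

namespace TT
open Finset
set_option linter.unusedSectionVars false

variable {p : ℕ} [Fact p.Prime]

lemma tuple_good {ι : Type*} [Fintype ι] [DecidableEq ι] (χ : MulChar (ZMod p) ℂ) (hχ : χ ≠ 1)
    (a : ι → ZMod p) (e : ι → ℕ) (hs : orderOf χ ∣ ∑ i, e i) (i0 : ι)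
    (hco : Nat.Coprime (e i0) (orderOf χ)) (ha : ∀ i, i ≠ i0 → a i ≠ a i0) :
    ‖∑ x, ∏ i, χ (x - a i) ^ e i‖ ≤ Fintype.card ι * Real.sqrt p := by
  have hp : p.Prime := Fact.out
  have he0 : e i0 ≠ 0 := by
    intro h
    rw [h, Nat.coprime_zero_left] at hco
    exact hχ (orderOf_eq_one_iff.1 hco)
  let ι' := {i : ι // i ≠ i0}
  let c : ι' → ZMod p := fun i => (a i - a i0)⁻¹
  let k : ℂ := ∏ i : ι', χ (a i - a i0) ^ e i
  have hcoe : Nat.Coprime (∑ i : ι', e i) (orderOf χ) := by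
    have h1 : ∑ i, e i = e i0 + ∑ i : ι', e i := by
      rw [← Finset.add_sum_erase _ _ (mem_univ i0)]
      congr 1
      rw [← Finset.sum_subtype (p := fun i => i ≠ i0)]
      intro x; simp
    rw [h1] at hs
    apply Nat.Coprime.symm
    apply Nat.coprime_of_dvd
    intro q hq h2 h3
    have h4 : q ∣ e i0 := by
      have := (h2.trans hs)
      exact (Nat.dvd_add_left h3).1 this
    have := Nat.dvd_gcd h4 h2
    rw [hco] at this
    exact hq.one_lt.ne' (Nat.dvd_one.1 this)
  have hw := weil χ hχ c (fun i : ι' => e i) hcoe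
  have hsplit : ∀ x, ∏ i, χ (x - a i) ^ e i = χ (x - a i0) ^ e i0 * ∏ i : ι', χ (x - a i) ^ e i := by
    intro x
    rw [← Finset.mul_prod_erase _ _ (mem_univ i0)]
    congr 1
    rw [← Finset.prod_subtype (p := fun i => i ≠ i0) (f := fun i => χ (x - a i) ^ e i)]
    intro x; simp
  have hval : ∀ z : ZMod p, z ≠ 0 → ∏ i, χ ((a i0 + z⁻¹) - a i) ^ e i = k * ∏ i : ι', χ (c i - z) ^ e i := by
    intro z hz
    have hone : χ z⁻¹ ^ (∑ i, e i) = 1 := by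
      obtain ⟨t, ht⟩ := hs
      have h1 := pow_orderOf_eq_one χ
      have h2 : χ z⁻¹ ^ orderOf χ = 1 := by
        have := congrArg (fun ψ : MulChar (ZMod p) ℂ => ψ ((Units.mk0 z⁻¹ (inv_ne_zero hz) : (ZMod p)ˣ) : ZMod p)) h1
        simp only [MulChar.pow_apply_coe, MulChar.one_apply_coe] at this
        exact this
      rw [ht, pow_mul, h2, one_pow]
    have h1 : ∀ i : ι', χ ((a i0 + z⁻¹) - a i) ^ e i = χ z⁻¹ ^ e i * (χ (a i - a i0) ^ e i * χ (c i - z) ^ e i) := by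
      intro i
      rw [← mul_pow, ← mul_pow, ← map_mul, ← map_mul]
      congr 2
      have : a i - a i0 ≠ 0 := sub_ne_zero.2 (ha i i.2)
      simp only [c]; field_simp
      ring
    rw [hsplit, prod_congr rfl fun i _ => h1 i, prod_mul_distrib, prod_mul_distrib,
      ← mul_assoc]
    have h3 : χ (a i0 + z⁻¹ - a i0) ^ e i0 * ∏ i : ι', χ z⁻¹ ^ e i = 1 := by
      rw [add_sub_cancel_left, ← hone, ← Finset.prod_pow_eq_pow_sum, ← Finset.mul_prod_erase univ _ (mem_univ i0)]
      congr 1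
      rw [← Finset.prod_subtype (p := fun i => i ≠ i0) (f := fun i => χ z⁻¹ ^ e i)]
      intro x; simp
    rw [h3, one_mul]
  have hzero : k * ∏ i : ι', χ (c i - 0) ^ e i = 1 := by
    simp only [k]
    rw [← prod_mul_distrib]
    apply prod_eq_one
    intro i _
    have : a i - a i0 ≠ 0 := sub_ne_zero.2 (ha i i.2)
    rw [← mul_pow, ← map_mul, sub_zero, mul_inv_cancel₀ this, map_one, one_pow]
  have hsum : ∑ x, ∏ i, χ (x - a i) ^ e i = k * ∑ z, ∏ i : ι', χ (c i - z) ^ e i - 1 := by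
    rw [mul_sum, ← Finset.add_sum_erase _ (fun z => k * ∏ i : ι', χ (c i - z) ^ e i) (mem_univ (0 : ZMod p)), hzero, add_sub_cancel_left]
    rw [← Finset.add_sum_erase _ (fun x => ∏ i, χ (x - a i) ^ e i) (mem_univ (a i0))]
    have hz0 : ∏ i, χ (a i0 - a i) ^ e i = 0 := by
      rw [hsplit, sub_self, MulChar.map_zero, zero_pow he0, zero_mul]
    rw [hz0, zero_add]
    symm
    refine sum_bij' (fun z _ => a i0 + z⁻¹) (fun x _ => (x - a i0)⁻¹) ?_ ?_ ?_ ?_ ?_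
    · intro z hz; simpa using hz
    · intro x hx; simpa [sub_eq_zero] using hx
    · intro z hz; simp
    · intro x hx; simp
    · intro z hz; rw [hval z (by simpa using hz)]
  have hk : ‖k‖ ≤ 1 := by
    simp only [k, norm_prod, norm_pow]
    apply prod_le_one (fun i _ => by positivity)
    intro i _
    exact pow_le_one₀ (norm_nonneg _) (DirichletCharacter.norm_le_one _ _)
  have hcard : Fintype.card ι = Fintype.card ι' + 1 := by
    have := Fintype.card_subtype_compl (fun i => i = i0)
    simp only [Fintype.card_subtype_eq] at this
    have h2 : 0 < Fintype.card ι := Fintype.card_pos_iff.2 ⟨i0⟩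
    simp only [ι', ne_eq]; omega
  have hsq : 1 ≤ Real.sqrt p := by
    rw [Real.one_le_sqrt]; exact_mod_cast hp.one_lt.le
  rw [hsum, hcard]
  refine (norm_sub_le _ _).trans ?_
  rw [norm_mul, norm_one]
  push_cast
  have := mul_le_mul hk hw (norm_nonneg _) zero_le_one
  nlinarith

lemma bad_count (r h : ℕ) (hr : 0 < r) {α : Type*} [DecidableEq α] (A : Finset α) (hA : #A = h) :
    #{τ ∈ Fintype.piFinset (fun _ : Fin r ⊕ Fin r => A) | ∀ i, ∃ j, j ≠ i ∧ τ j = τ i} ≤ r ^ (2 * r) * h ^ r := by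
  classical
  let B := (univ : Finset (Fin r ⊕ Fin r → Fin r)) ×ˢ Fintype.piFinset (fun _ : Fin r => A)
  have hB : #B = r ^ (2 * r) * h ^ r := by
    simp [B, hA]; left; congr 1; omega
  rw [← hB]
  refine le_trans (card_le_card ?_) (card_image_le (f := fun x : (Fin r ⊕ Fin r → Fin r) × (Fin r → α) => x.2 ∘ x.1))
  intro τ hτ
  rw [mem_filter, Fintype.mem_piFinset] at hτ
  obtain ⟨hτA, hτ⟩ := hτ
  have hne : Nonempty (Fin r ⊕ Fin r) := ⟨Sum.inl ⟨0, hr⟩⟩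
  have him : 2 * #(univ.image τ) ≤ 2 * r := by
    have h1 := card_eq_sum_card_image τ univ
    have h2 : #(univ.image τ) • 2 ≤ ∑ b ∈ univ.image τ, #{a | τ a = b} := by
      apply card_nsmul_le_sum
      intro x hx
      obtain ⟨i, -, rfl⟩ := mem_image.1 hx
      obtain ⟨j, hj, hj2⟩ := hτ i
      have : ({i, j} : Finset _) ⊆ ({a | τ a = τ i} : Finset _) := by
        intro y; simp only [mem_insert, mem_singleton, mem_filter, mem_univ, true_and]
        rintro (rfl | rfl) <;> simp [hj2]
      have h3 := card_le_card this
      rwa [card_pair hj.symm] at h3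
    rw [← h1] at h2
    simp at h2
    omega
  have hle : #(univ.image τ) ≤ r := by omega
  obtain ⟨σ, hσ⟩ : ∃ σ : Fin r → α, univ.image σ = univ.image τ := by
    have hpos : 0 < #(univ.image τ) := card_pos.2 (univ_nonempty.image _)
    let en := (univ.image τ).equivFin
    refine ⟨fun i => en.symm ⟨min i (#(univ.image τ) - 1), by omega⟩, ?_⟩
    apply Subset.antisymm
    · intro x hx
      obtain ⟨i, -, rfl⟩ := mem_image.1 hx
      exact (en.symm _).2
    · intro x hx
      rw [mem_image]
      refine ⟨⟨en ⟨x, hx⟩, by have := (en ⟨x, hx⟩).2; omega⟩, mem_univ _, ?_⟩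
      have h5 : min (en ⟨x, hx⟩ : ℕ) (#(univ.image τ) - 1) = en ⟨x, hx⟩ := by
        have := (en ⟨x, hx⟩).2; omega
      simp only [h5, Fin.eta, Equiv.symm_apply_apply]
  have hg : ∀ i, ∃ j, σ j = τ i := by
    intro i
    have : τ i ∈ univ.image σ := by rw [hσ]; exact mem_image_of_mem _ (mem_univ _)
    obtain ⟨j, -, hj⟩ := mem_image.1 this
    exact ⟨j, hj⟩
  choose g hg using hg
  rw [mem_image]
  refine ⟨(g, σ), ?_, ?_⟩
  · simp only [B, mem_product, mem_univ, true_and, Fintype.mem_piFinset]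
    intro j
    have : σ j ∈ univ.image τ := by rw [← hσ]; exact mem_image_of_mem _ (mem_univ _)
    obtain ⟨i, -, hi⟩ := mem_image.1 this
    rw [← hi]; exact hτA i
  · funext i; exact hg i

lemma moment (χ : MulChar (ZMod p) ℂ) (hχ : χ ≠ 1) (r : ℕ) (hr : 0 < r) (A : Finset (ZMod p)) :
    ∑ x, ‖∑ v ∈ A, χ (x - v)‖ ^ (2 * r) ≤
      2 * r * (#A : ℝ) ^ (2 * r) * Real.sqrt p + (r : ℝ) ^ (2 * r) * (#A : ℝ) ^ r * p := by
  classical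
  have hp : p.Prime := Fact.out
  set d := orderOf χ with hd
  have hdp : d ∣ p - 1 := by
    have := MulChar.orderOf_dvd_card_sub_one (χ := χ)
    rwa [ZMod.card] at this
  have hd0 : 0 < d := Nat.pos_of_dvd_of_pos hdp (by have := hp.two_le; omega)
  have hd1 : d ≠ 1 := fun h => hχ (orderOf_eq_one_iff.1 h)
  have hconj : ∀ y, (starRingEnd ℂ) (χ y) = χ y ^ (d - 1) := by
    intro y
    by_cases hy : y = 0
    · subst hy; rw [MulChar.map_zero, map_zero, zero_pow (by omega)]
    · have h2 : χ y ^ d = 1 := by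
        have := congrArg (fun ψ : MulChar (ZMod p) ℂ => ψ ((Units.mk0 y hy : (ZMod p)ˣ) : ZMod p)) (pow_orderOf_eq_one χ)
        simp only [MulChar.pow_apply_coe, MulChar.one_apply_coe] at this
        exact this
      have h3 : ‖χ y‖ = 1 := by
        exact Complex.norm_eq_one_of_pow_eq_one h2 hd0.ne'
      have h4 : χ y ≠ 0 := by intro h; rw [h] at h3; simp at h3
      have h5 : χ y * (starRingEnd ℂ) (χ y) = 1 := by
        rw [Complex.mul_conj, Complex.normSq_eq_norm_sq, h3]; simp
      apply mul_left_cancel₀ h4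
      rw [h5, ← pow_succ', Nat.sub_add_cancel hd0, h2]
  let e : Fin r ⊕ Fin r → ℕ := Sum.elim (fun _ => 1) (fun _ => d - 1)
  have hes : d ∣ ∑ i, e i := by
    simp only [e, Fintype.sum_sum_type, Sum.elim_inl, Sum.elim_inr, sum_const, card_univ, Fintype.card_fin,
      smul_eq_mul, ← mul_add]
    rw [Nat.add_sub_cancel' hd0]; exact dvd_mul_left _ _
  have heco : ∀ i, Nat.Coprime (e i) d := by
    rintro (i | i)
    · simp [e]
    · simp only [e, Sum.elim_inr]
      exact (Nat.coprime_self_sub_left hd0).2 (Nat.coprime_one_left _)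
  have hexp : ∀ x, ((‖∑ v ∈ A, χ (x - v)‖ ^ (2 * r) : ℝ) : ℂ) =
      ∑ τ ∈ Fintype.piFinset (fun _ : Fin r ⊕ Fin r => A), ∏ i, χ (x - τ i) ^ e i := by
    intro x
    rw [← Finset.prod_univ_sum (t := fun _ : Fin r ⊕ Fin r => A) (f := fun i v => χ (x - v) ^ e i)]
    simp only [Fintype.prod_sum_type, e, Sum.elim_inl, Sum.elim_inr, pow_one, prod_const, card_univ,
      Fintype.card_fin, ← hconj, ← map_sum]
    rw [← mul_pow, Complex.mul_conj, Complex.normSq_eq_norm_sq, pow_mul]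
    push_cast; rfl
  have hsum : ((∑ x, ‖∑ v ∈ A, χ (x - v)‖ ^ (2 * r) : ℝ) : ℂ) =
      ∑ τ ∈ Fintype.piFinset (fun _ : Fin r ⊕ Fin r => A), ∑ x, ∏ i, χ (x - τ i) ^ e i := by
    rw [Complex.ofReal_sum, sum_comm]
    exact sum_congr rfl fun x _ => hexp x
  have hnn : 0 ≤ ∑ x, ‖∑ v ∈ A, χ (x - v)‖ ^ (2 * r) := by positivity
  rw [← abs_of_nonneg hnn, ← Real.norm_eq_abs, ← Complex.norm_real, hsum]
  refine (norm_sum_le _ _).trans ?_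
  rw [← sum_filter_add_sum_filter_not _ (fun τ : Fin r ⊕ Fin r → ZMod p => ∀ i, ∃ j, j ≠ i ∧ τ j = τ i), add_comm]
  apply add_le_add
  · have h1 : ∀ τ ∈ {τ ∈ Fintype.piFinset (fun _ : Fin r ⊕ Fin r => A) | ¬ ∀ i, ∃ j, j ≠ i ∧ τ j = τ i},
      ‖∑ x, ∏ i, χ (x - τ i) ^ e i‖ ≤ 2 * r * Real.sqrt p := by
      intro τ hτ
      have := (mem_filter.1 hτ).2
      push Not at this
      obtain ⟨i0, hi0⟩ := this
      refine (tuple_good χ hχ τ e hes i0 (heco i0) hi0).trans (le_of_eq ?_)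
      simp only [Fintype.card_sum, Fintype.card_fin]; push_cast; ring
    refine (sum_le_card_nsmul _ _ _ h1).trans ?_
    rw [nsmul_eq_mul]
    have h2 : (#{τ ∈ Fintype.piFinset (fun _ : Fin r ⊕ Fin r => A) | ¬ ∀ i, ∃ j, j ≠ i ∧ τ j = τ i} : ℝ) ≤ (#A : ℝ) ^ (2 * r) := by
      have h3 := card_filter_le (Fintype.piFinset (fun _ : Fin r ⊕ Fin r => A)) (fun τ => ¬ ∀ i, ∃ j, j ≠ i ∧ τ j = τ i)
      rw [Fintype.card_piFinset, prod_const, card_univ] at h3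
      have h4 : Fintype.card (Fin r ⊕ Fin r) = 2 * r := by simp; ring
      rw [h4] at h3
      exact_mod_cast h3
    calc _ ≤ (#A : ℝ) ^ (2 * r) * (2 * r * Real.sqrt p) := by gcongr
      _ = _ := by ring
  · have h1 : ∀ τ ∈ {τ ∈ Fintype.piFinset (fun _ : Fin r ⊕ Fin r => A) | ∀ i, ∃ j, j ≠ i ∧ τ j = τ i},
      ‖∑ x, ∏ i, χ (x - τ i) ^ e i‖ ≤ p := by
      intro τ hτ
      refine (norm_sum_le _ _).trans ?_
      have : ∀ x ∈ (univ : Finset (ZMod p)), ‖∏ i, χ (x - τ i) ^ e i‖ ≤ 1 := by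
        intro x _
        rw [norm_prod]
        apply prod_le_one (fun i _ => by positivity)
        intro i _
        rw [norm_pow]
        exact pow_le_one₀ (norm_nonneg _) (DirichletCharacter.norm_le_one _ _)
      refine (sum_le_card_nsmul _ _ _ this).trans ?_
      simp
    refine (sum_le_card_nsmul _ _ _ h1).trans ?_
    rw [nsmul_eq_mul]
    have h2 := bad_count r (#A) hr A rfl
    have h3 : (#{τ ∈ Fintype.piFinset (fun _ : Fin r ⊕ Fin r => A) | ∀ i, ∃ j, j ≠ i ∧ τ j = τ i} : ℝ) ≤
      (r : ℝ) ^ (2 * r) * (#A : ℝ) ^ r := by exact_mod_cast h2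
    gcongr
end TT

namespace TT
open Finset
set_option linter.unusedSectionVars false

lemma prefix_dyadic (L : ℕ) : ∀ (f : ℕ → ℂ) (j : ℕ), j < 2 ^ L → ∃ c : ℕ → ℕ, (∀ l < L, c l < 2 ^ (L - l)) ∧
    ‖∑ i ∈ range j, f i‖ ≤ ∑ l ∈ range L, ‖∑ i ∈ range (2 ^ l), f (c l * 2 ^ l + i)‖ := by
  induction L with
  | zero => intro f j hj; refine ⟨fun _ => 0, by simp, ?_⟩; simp at hj; simp [hj]
  | succ L ih =>
    intro f j hj
    by_cases h : j < 2 ^ L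
    · obtain ⟨c, hc, hb⟩ := ih f j h
      refine ⟨fun l => if l = L then 0 else c l, ?_, ?_⟩
      · intro l hl
        by_cases hlL : l = L
        · simp [hlL]
        · simp only [hlL, if_false]
          exact (hc l (by omega)).trans_le (Nat.pow_le_pow_right (by norm_num) (by omega))
      · rw [sum_range_succ]
        refine hb.trans (le_add_of_le_of_nonneg (le_of_eq (sum_congr rfl fun l hl => ?_)) (norm_nonneg _))
        rw [mem_range] at hl
        simp [hl.ne]
    · push Not at h
      obtain ⟨c, hc, hb⟩ := ih (fun i => f (2 ^ L + i)) (j - 2 ^ L) (by rw [pow_succ] at hj; omega)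
      refine ⟨fun l => if l = L then 0 else c l + 2 ^ (L - l), ?_, ?_⟩
      · intro l hl
        by_cases hlL : l = L
        · simp [hlL]
        · simp only [hlL, if_false]
          have := hc l (by omega)
          rw [show L + 1 - l = (L - l) + 1 by omega, pow_succ]; omega
      · rw [sum_range_succ]
        have h1 : ∑ i ∈ range j, f i = ∑ i ∈ range (2 ^ L), f i + ∑ i ∈ range (j - 2 ^ L), f (2 ^ L + i) := by
          conv_lhs => rw [show j = 2 ^ L + (j - 2 ^ L) by omega, sum_range_add]
        rw [h1, add_comm]
        refine (norm_add_le _ _).trans (add_le_add (hb.trans (le_of_eq (sum_congr rfl fun l hl => ?_))) ?_)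
        · rw [mem_range] at hl
          simp only [hl.ne, if_false]
          congr 1
          refine sum_congr rfl fun i _ => ?_
          congr 1
          rw [add_mul, ← pow_add, Nat.sub_add_cancel hl.le]; ring
        · simp

variable {p : ℕ} [Fact p.Prime]

lemma block_moment (χ : MulChar (ZMod p) ℂ) (hχ : χ ≠ 1) (r : ℕ) (hr : 0 < r) (s h : ℕ) (hh : h ≤ p) :
    ∑ x, ‖∑ i ∈ range h, χ (x - ((s + i : ℕ) : ZMod p))‖ ^ (2 * r) ≤
      2 * r * (h : ℝ) ^ (2 * r) * Real.sqrt p + (r : ℝ) ^ (2 * r) * (h : ℝ) ^ r * p := by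
  classical
  have hinj : Set.InjOn (fun i : ℕ => ((s + i : ℕ) : ZMod p)) (range h : Set ℕ) := by
    intro i hi j hj hij
    simp only [coe_range, Set.mem_Iio] at hi hj
    simp only [Nat.cast_add, add_right_inj] at hij
    rw [ZMod.natCast_eq_natCast_iff', Nat.mod_eq_of_lt (by omega), Nat.mod_eq_of_lt (by omega)] at hij
    exact hij
  have h1 := moment χ hχ r hr ((range h).image (fun i : ℕ => ((s + i : ℕ) : ZMod p)))
  rw [card_image_of_injOn hinj, card_range] at h1
  refine le_trans (le_of_eq ?_) h1
  refine sum_congr rfl fun x _ => ?_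
  rw [sum_image hinj]

lemma maxT_aux (χ : MulChar (ZMod p) ℂ) (hχ : χ ≠ 1) (r : ℕ) (hr : 0 < r) (L : ℕ)
    (hL : ∀ l < L, 2 ^ l ≤ p) :
    ∃ T : ZMod p → ℝ, (∀ x, 0 ≤ T x) ∧
      (∀ x, ∀ s t : ℕ, s ≤ t → t < 2 ^ L → ‖∑ v ∈ Ico s t, χ (x - (v : ZMod p))‖ ≤ T x) ∧
      ∑ x, T x ^ (2 * r) ≤ 4 ^ r * (L : ℝ) ^ (2 * r) *
        (2 * r * ((2 : ℝ) ^ L) ^ (2 * r) * Real.sqrt p + (r : ℝ) ^ (2 * r) * ((2 : ℝ) ^ L) ^ r * p) := by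
  classical
  let B : ZMod p → ℕ → ℕ → ℝ := fun x l c => ‖∑ i ∈ range (2 ^ l), χ (x - ((c * 2 ^ l + i : ℕ) : ZMod p))‖
  let Q : ZMod p → ℝ := fun x => ∑ l ∈ range L, ∑ c ∈ range (2 ^ (L - l)), B x l c ^ (2 * r)
  have hQ0 : ∀ x, 0 ≤ Q x := fun x => by positivity
  have hr2 : 2 * r ≠ 0 := by omega
  let T : ZMod p → ℝ := fun x => 2 * ((L : ℝ) ^ (2 * r - 1) * Q x) ^ (((2 * r : ℕ) : ℝ)⁻¹)
  have hT : ∀ x, T x ^ (2 * r) = 4 ^ r * ((L : ℝ) ^ (2 * r - 1) * Q x) := by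
    intro x
    simp only [T]
    rw [mul_pow, Real.rpow_inv_natCast_pow (by have := hQ0 x; positivity) hr2, pow_mul]; norm_num
  have hpre : ∀ x, ∀ j < 2 ^ L, ‖∑ v ∈ range j, χ (x - (v : ZMod p))‖ ≤ T x / 2 := by
    intro x j hj
    obtain ⟨c, hc, hb⟩ := prefix_dyadic L (fun v => χ (x - (v : ZMod p))) j hj
    have h1 : ‖∑ v ∈ range j, χ (x - (v : ZMod p))‖ ^ (2 * r) ≤ (L : ℝ) ^ (2 * r - 1) * Q x := by
      calc _ ≤ (∑ l ∈ range L, B x l (c l)) ^ (2 * r) := by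
            exact pow_le_pow_left₀ (norm_nonneg _) hb _
        _ ≤ (L : ℝ) ^ (2 * r - 1) * ∑ l ∈ range L, B x l (c l) ^ (2 * r) := by
            have h3 := pow_sum_div_card_le_sum_pow (s := range L) (f := fun l => B x l (c l))
              (fun l _ => norm_nonneg _) (2 * r - 1)
            rw [show 2 * r - 1 + 1 = 2 * r by omega, card_range] at h3
            rcases Nat.eq_zero_or_pos L with h0 | h0
            · subst h0; simp [hr.ne']
            · rw [div_le_iff₀ (by positivity)] at h3
              rw [mul_comm (_ ^ (2 * r - 1))]; exact h3
        _ ≤ _ := by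
            refine mul_le_mul_of_nonneg_left ?_ (by positivity)
            refine sum_le_sum fun l hl => ?_
            exact single_le_sum (f := fun c => B x l c ^ (2 * r)) (fun c _ => by positivity)
              (mem_range.2 (hc l (mem_range.1 hl)))
    have h2 : T x / 2 = ((L : ℝ) ^ (2 * r - 1) * Q x) ^ (((2 * r : ℕ) : ℝ)⁻¹) := by
      simp only [T]; ring
    rw [h2]
    refine le_of_pow_le_pow_left₀ hr2 (by have := hQ0 x; positivity) ?_
    rwa [Real.rpow_inv_natCast_pow (by have := hQ0 x; positivity) hr2]
  refine ⟨T, fun x => by have := hQ0 x; positivity, ?_, ?_⟩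
  · intro x s t hst ht
    rw [sum_Ico_eq_sub _ hst]
    refine (norm_sub_le _ _).trans ?_
    have h1 := hpre x t ht
    have h2 := hpre x s (by omega)
    linarith
  · simp only [hT]
    rw [← mul_sum, ← mul_sum]
    set W := (2 * r * ((2 : ℝ) ^ L) ^ (2 * r) * Real.sqrt p + (r : ℝ) ^ (2 * r) * ((2 : ℝ) ^ L) ^ r * p) with hW
    have hQ : ∑ x, Q x ≤ L * W := by
      simp only [Q]
      rw [sum_comm]
      have : ∀ l ∈ range L, ∑ x, ∑ c ∈ range (2 ^ (L - l)), B x l c ^ (2 * r) ≤ W := by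
        intro l hl
        rw [mem_range] at hl
        rw [sum_comm]
        have h1 : ∀ c ∈ range (2 ^ (L - l)), ∑ x, B x l c ^ (2 * r) ≤
          2 * r * ((2 ^ l : ℕ) : ℝ) ^ (2 * r) * Real.sqrt p + (r : ℝ) ^ (2 * r) * ((2 ^ l : ℕ) : ℝ) ^ r * p :=
          fun c _ => block_moment χ hχ r hr (c * 2 ^ l) (2 ^ l) (hL l hl)
        refine (sum_le_card_nsmul _ _ _ h1).trans ?_
        rw [card_range, nsmul_eq_mul]
        push_cast
        have h2 : (2 : ℝ) ^ (L - l) * ((2 : ℝ) ^ l) ^ (2 * r) ≤ ((2 : ℝ) ^ L) ^ (2 * r) := by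
          rw [← pow_mul, ← pow_mul, ← pow_add]
          refine pow_le_pow_right₀ (by norm_num) ?_
          obtain ⟨m, rfl⟩ : ∃ m, L = l + m := ⟨L - l, by omega⟩
          rw [Nat.add_sub_cancel_left]; nlinarith
        have h3 : (2 : ℝ) ^ (L - l) * ((2 : ℝ) ^ l) ^ r ≤ ((2 : ℝ) ^ L) ^ r := by
          rw [← pow_mul, ← pow_mul, ← pow_add]
          refine pow_le_pow_right₀ (by norm_num) ?_
          obtain ⟨m, rfl⟩ : ∃ m, L = l + m := ⟨L - l, by omega⟩
          rw [Nat.add_sub_cancel_left]; nlinarith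
        calc _ = 2 * r * ((2 : ℝ) ^ (L - l) * ((2 : ℝ) ^ l) ^ (2 * r)) * Real.sqrt p + (r : ℝ) ^ (2 * r) * ((2 : ℝ) ^ (L - l) * ((2 : ℝ) ^ l) ^ r) * p := by ring
          _ ≤ _ := by rw [hW]; gcongr
      refine (sum_le_card_nsmul _ _ _ this).trans ?_
      rw [card_range, nsmul_eq_mul]
    calc _ ≤ (4 : ℝ) ^ r * ((L : ℝ) ^ (2 * r - 1) * (L * W)) := by gcongr
      _ = _ := by
        obtain ⟨m, hm⟩ : ∃ m, 2 * r = m + 1 := ⟨2 * r - 1, by omega⟩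
        rw [hm, Nat.add_sub_cancel, pow_succ]; ring

lemma L_bound (ε : ℝ) (hε : 0 < ε) (L : ℕ) : (L : ℝ) ≤ 2 / ε * ((2 : ℝ) ^ L) ^ ε := by
  have h1 := Real.log_le_rpow_div (x := (2 : ℝ) ^ L) (by positivity) hε
  rw [Real.log_pow] at h1
  have h2 : (1 / 2 : ℝ) < Real.log 2 := by have := Real.log_two_gt_d9; linarith
  have h3 : (0 : ℝ) ≤ L := by positivity
  have h4 : 2 / ε * ((2 : ℝ) ^ L) ^ ε = 2 * (((2 : ℝ) ^ L) ^ ε / ε) := by ring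
  rw [h4]; nlinarith

theorem maxT (r : ℕ) (hr : 0 < r) (ε : ℝ) (hε : 0 < ε) : ∃ C : ℝ, 0 < C ∧ ∀ (p : ℕ) [Fact p.Prime]
    (χ : MulChar (ZMod p) ℂ), χ ≠ 1 → ∀ V : ℕ, 1 ≤ V → V ^ (2 * r) ≤ p →
    ∃ T : ZMod p → ℝ, (∀ x, 0 ≤ T x) ∧
      (∀ x, ∀ s t : ℕ, s ≤ t → t ≤ V + 1 → ‖∑ v ∈ Ico s t, χ (x - (v : ZMod p))‖ ≤ T x) ∧
      ∑ x, T x ^ (2 * r) ≤ C * (p : ℝ) ^ ε * (p * Real.sqrt p) := by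
  refine ⟨4 ^ r * ((2 / ε) ^ (2 * r) * ((16 : ℝ) ^ r) ^ ε) * (2 * r * 16 ^ r + (r : ℝ) ^ (2 * r) * 4 ^ r), by positivity, ?_⟩
  intro p hpF χ hχ V hV hVp
  have hp : p.Prime := Fact.out
  set L := Nat.log 2 (V + 1) + 1 with hL
  have hL1 : V + 1 < 2 ^ L := Nat.lt_pow_succ_log_self (by norm_num) _
  have hL2 : 2 ^ (L - 1) ≤ V + 1 := Nat.pow_log_le_self 2 (by omega)
  have hL3 : 2 ^ L ≤ 4 * V := by
    have : 2 ^ L = 2 ^ (L - 1) * 2 := by rw [← pow_succ]; congr 1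
    omega
  have hVp2 : V + 1 ≤ p := by
    by_contra h
    have h1 : p ≤ V := by omega
    have h2 : V < V ^ (2 * r) := by
      have : V ^ 1 < V ^ (2 * r) := Nat.pow_lt_pow_right (by have := hp.two_le; omega) (by omega)
      simpa using this
    omega
  obtain ⟨T, hT0, hT1, hT2⟩ := maxT_aux χ hχ r hr L (by
    intro l hl
    exact ((Nat.pow_le_pow_right (by norm_num) (by omega : l ≤ L - 1)).trans hL2).trans hVp2)
  refine ⟨T, hT0, fun x s t hst ht => hT1 x s t hst (by omega), hT2.trans ?_⟩
  have hVr : (V : ℝ) ^ (2 * r) ≤ p := by exact_mod_cast hVp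
  have hVs : (V : ℝ) ^ r ≤ Real.sqrt p := by
    apply Real.le_sqrt_of_sq_le
    rw [← pow_mul, mul_comm]; exact hVr
  have h4 : (2 : ℝ) ^ L ≤ 4 * V := by exact_mod_cast hL3
  have h5 : ((2 : ℝ) ^ L) ^ (2 * r) ≤ 16 ^ r * p := by
    calc _ ≤ (4 * V : ℝ) ^ (2 * r) := by gcongr
      _ = 16 ^ r * (V : ℝ) ^ (2 * r) := by rw [mul_pow, pow_mul]; norm_num
      _ ≤ _ := by gcongr
  have h6 : ((2 : ℝ) ^ L) ^ r ≤ 4 ^ r * Real.sqrt p := by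
    calc _ ≤ (4 * V : ℝ) ^ r := by gcongr
      _ = 4 ^ r * (V : ℝ) ^ r := by rw [mul_pow]
      _ ≤ _ := by gcongr
  have h7 : (L : ℝ) ^ (2 * r) ≤ (2 / ε) ^ (2 * r) * (((16 : ℝ) ^ r) ^ ε * (p : ℝ) ^ ε) := by
    calc _ ≤ (2 / ε * ((2 : ℝ) ^ L) ^ ε) ^ (2 * r) := by gcongr; exact L_bound ε hε L
      _ = (2 / ε) ^ (2 * r) * (((2 : ℝ) ^ L) ^ (2 * r)) ^ ε := by
        rw [mul_pow, ← Real.rpow_natCast (((2 : ℝ) ^ L) ^ ε), ← Real.rpow_mul (by positivity),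
          mul_comm ε, Real.rpow_mul (by positivity), Real.rpow_natCast]
      _ ≤ (2 / ε) ^ (2 * r) * (16 ^ r * p) ^ ε := by gcongr
      _ = _ := by rw [Real.mul_rpow (by positivity) (by positivity)]
  calc _ ≤ 4 ^ r * ((2 / ε) ^ (2 * r) * (((16 : ℝ) ^ r) ^ ε * (p : ℝ) ^ ε)) *
        (2 * r * (16 ^ r * p) * Real.sqrt p + (r : ℝ) ^ (2 * r) * (4 ^ r * Real.sqrt p) * p) := by gcongr
    _ = _ := by ring
end TT

namespace TT
open Finset

theorem divisor_bound (ε : ℝ) (hε : 0 < ε) : ∃ C : ℝ, 1 ≤ C ∧ ∀ n : ℕ, n ≠ 0 → (#n.divisors : ℝ) ≤ C * (n : ℝ) ^ ε := by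
  set A : ℝ := max 1 (2 / ε * 2 ^ ε) with hA
  have hA1 : 1 ≤ A := le_max_left _ _
  obtain ⟨P, hP⟩ := exists_nat_gt ((2 : ℝ) ^ (1 / ε))
  refine ⟨A ^ P, one_le_pow₀ hA1, ?_⟩
  intro n hn
  rw [Nat.card_divisors hn]
  push_cast
  have hfac : ∀ q ∈ n.primeFactors, ((n.factorization q : ℝ) + 1) ≤
      (if q < P then A else 1) * ((q : ℝ) ^ (n.factorization q)) ^ ε := by
    intro q hq
    have hqp := Nat.prime_of_mem_primeFactors hq
    have hq2 : (2 : ℝ) ≤ q := by exact_mod_cast hqp.two_le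
    set v := n.factorization q
    split_ifs with h
    · have h1 := L_bound ε hε (v + 1)
      have h2 : ((2 : ℝ) ^ (v + 1)) ^ ε = 2 ^ ε * ((2 : ℝ) ^ v) ^ ε := by
        rw [pow_succ', Real.mul_rpow (by positivity) (by positivity)]
      rw [h2] at h1
      push_cast at h1
      calc _ ≤ _ := h1
        _ = (2 / ε * 2 ^ ε) * ((2 : ℝ) ^ v) ^ ε := by ring
        _ ≤ _ := by
          gcongr
          exact le_max_right _ _
    · rw [one_mul]
      push Not at h
      have h1 : (2 : ℝ) ≤ (q : ℝ) ^ ε := by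
        have : (2 : ℝ) = ((2 : ℝ) ^ (1 / ε)) ^ ε := by
          rw [← Real.rpow_mul (by norm_num), one_div, inv_mul_cancel₀ hε.ne', Real.rpow_one]
        rw [this]
        gcongr
        exact hP.le.trans (by exact_mod_cast h)
      have h2 : ((q : ℝ) ^ v) ^ ε = ((q : ℝ) ^ ε) ^ v := by
        rw [← Real.rpow_natCast, ← Real.rpow_natCast, ← Real.rpow_mul (by positivity),
          ← Real.rpow_mul (by positivity), mul_comm]
      rw [h2]
      have h3 : v + 1 ≤ 2 ^ v := Nat.lt_two_pow_self
      calc ((v : ℝ) + 1) ≤ 2 ^ v := by exact_mod_cast h3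
        _ ≤ _ := by gcongr
  refine (prod_le_prod (fun q _ => by positivity) hfac).trans ?_
  rw [prod_mul_distrib]
  have h1 : ∏ q ∈ n.primeFactors, ((q : ℝ) ^ (n.factorization q)) ^ ε = (n : ℝ) ^ ε := by
    rw [Real.finset_prod_rpow _ _ (fun q _ => by positivity)]
    congr 1
    conv_rhs => rw [← Nat.prod_factorization_pow_eq_self hn]
    rw [Finsupp.prod, Nat.support_factorization]
    push_cast; rfl
  rw [h1]
  gcongr
  rw [← prod_filter, prod_const]
  apply pow_le_pow_right₀ hA1
  calc _ ≤ #(range P) := card_le_card (by intro q; simp)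
    _ = P := card_range P
end TT

namespace TT
open Finset

def idx (X d : ℕ) : ℕ := #(X.divisors.filter (· < d))

lemma idx_lt {X d : ℕ} (h : d ∈ X.divisors) : idx X d < #X.divisors := by
  apply card_lt_card
  rw [filter_ssubset]
  exact ⟨d, h, lt_irrefl d⟩

lemma idx_mono {X d d' : ℕ} (h : d ∈ X.divisors) (hlt : d < d') : idx X d < idx X d' := by
  apply card_lt_card
  rw [ssubset_iff_of_subset]
  · exact ⟨d, by simp only [mem_filter]; exact ⟨h, hlt⟩, by simp⟩
  · intro x; simp only [mem_filter]; exact fun hx => ⟨hx.1, hx.2.trans hlt⟩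

lemma idx_inj {X d d' : ℕ} (h : d ∈ X.divisors) (h' : d' ∈ X.divisors) (heq : idx X d = idx X d') : d = d' := by
  rcases lt_trichotomy d d' with hl | hl | hl
  · have := idx_mono h hl; omega
  · exact hl
  · have := idx_mono h' hl; omega

lemma int_dvd_mem {z : ℤ} (hz : z ≠ 0) {d : ℕ} (h : (d : ℤ) ∣ z) : d ∈ z.natAbs.divisors := by
  rw [Nat.mem_divisors]
  exact ⟨Int.natCast_dvd.1 h, by simpa using hz⟩

section
variable (p : ℕ) (a b : ℤ) (K0 M1 N0 U0 Tau : ℕ)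

def RR : ℕ := a.natAbs * K0 + b.natAbs * M1 * N0

lemma abs_rr {k m n : ℕ} (hk : k ≤ K0) (hm : m ≤ M1) (hn : n ≤ N0) :
    |a * k + b * m * n| ≤ RR a b K0 M1 N0 := by
  refine (abs_add_le _ _).trans ?_
  simp only [RR, abs_mul, Nat.abs_cast]
  push_cast
  simp only [Int.abs_eq_natAbs]
  gcongr

lemma count_zero (hp : p.Prime) (ha : ¬ (p : ℤ) ∣ a) (hb : b ≠ 0) (hK : K0 < p)
    (hTau : ∀ z : ℕ, z ≠ 0 → z ≤ RR a b K0 M1 N0 → #z.divisors ≤ Tau) (Hs : Finset ℤ) :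
    #{t ∈ Icc 1 K0 ×ˢ Icc 1 M1 ×ˢ Icc 1 N0 | ∃ h ∈ Hs, a * (t.1 : ℤ) + b * t.2.1 * t.2.2 = h * p} ≤
      K0 * #Hs * Tau ^ 2 := by
  classical
  have hp0 : (p : ℤ) ≠ 0 := by exact_mod_cast hp.ne_zero
  let B := Icc 1 K0 ×ˢ Hs ×ˢ range Tau ×ˢ range Tau
  have hB : #B = K0 * #Hs * Tau ^ 2 := by
    simp only [B, card_product, Nat.card_Icc, card_range]; rw [Nat.add_sub_cancel]; ring
  rw [← hB]
  let hh : ℕ × ℕ × ℕ → ℤ := fun t => (a * (t.1 : ℤ) + b * t.2.1 * t.2.2) / p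
  let φ : ℕ × ℕ × ℕ → ℕ × ℤ × ℕ × ℕ := fun t => (t.1, hh t, idx (hh t * p - a * t.1).natAbs t.2.1,
    idx (hh t * p - a * t.1).natAbs t.2.2)
  have key : ∀ t ∈ ({t ∈ Icc 1 K0 ×ˢ Icc 1 M1 ×ˢ Icc 1 N0 | ∃ h ∈ Hs, a * (t.1 : ℤ) + b * t.2.1 * t.2.2 = h * p} : Finset _),
      hh t ∈ Hs ∧ t.1 ∈ Icc 1 K0 ∧ hh t * p - a * t.1 = b * t.2.1 * t.2.2 ∧
      t.2.1 ∈ (hh t * p - a * t.1).natAbs.divisors ∧ t.2.2 ∈ (hh t * p - a * t.1).natAbs.divisors ∧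
      #(hh t * p - a * t.1).natAbs.divisors ≤ Tau := by
    rintro ⟨k, m, n⟩ ht
    simp only [mem_filter, mem_product, mem_Icc] at ht
    obtain ⟨⟨⟨hk1, hk2⟩, ⟨hm1, hm2⟩, hn1, hn2⟩, h, hH, heq⟩ := ht
    have hhe : hh (k, m, n) = h := by
      simp only [hh]; rw [heq, Int.mul_ediv_cancel _ hp0]
    have h2 : h * p - a * k = b * m * n := by linarith
    have hne : b * m * n ≠ 0 := by
      have : (m : ℤ) ≠ 0 := by omega
      have : (n : ℤ) ≠ 0 := by omega
      positivity
    simp only [hhe, h2]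
    refine ⟨hH, mem_Icc.2 ⟨hk1, hk2⟩, trivial, int_dvd_mem hne ⟨b * n, by ring⟩, int_dvd_mem hne ⟨b * m, by ring⟩, ?_⟩
    apply hTau _ (by simpa using hne)
    simp only [RR, Int.natAbs_mul, Int.natAbs_natCast]
    refine le_trans ?_ (Nat.le_add_left _ _)
    gcongr
  apply card_le_card_of_injOn φ
  · intro t ht
    obtain ⟨h1, h2, -, h4, h5, h6⟩ := key t ht
    simp only [B, φ, coe_product, Set.mem_prod, mem_coe, mem_range]
    exact ⟨h2, h1, (idx_lt h4).trans_le h6, (idx_lt h5).trans_le h6⟩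
  · intro t ht t' ht' heq
    obtain ⟨-, -, -, h4, h5, -⟩ := key t ht
    obtain ⟨-, -, -, h4', h5', -⟩ := key t' ht'
    simp only [φ, Prod.mk.injEq] at heq
    obtain ⟨e1, e2, e3, e4⟩ := heq
    rw [e1, e2] at e3 e4 h4 h5
    exact Prod.ext e1 (Prod.ext (idx_inj h4 h4' e3) (idx_inj h5 h5' e4))

noncomputable def kmin (s : ℤ) (n : ℕ) : ℕ := sInf {k : ℕ | 1 ≤ k ∧ ∃ m : ℕ, a * k + b * m * n = s}

lemma kmin_spec {s : ℤ} {n k m : ℕ} (hk : 1 ≤ k) (h : a * k + b * m * n = s) :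
    1 ≤ kmin a b s n ∧ kmin a b s n ≤ k ∧ (n : ℤ) ∣ a * ((k - kmin a b s n : ℕ) : ℤ) := by
  have hmem : k ∈ {k : ℕ | 1 ≤ k ∧ ∃ m : ℕ, a * k + b * m * n = s} := ⟨hk, m, h⟩
  have h1 := Nat.sInf_mem ⟨k, hmem⟩
  have h2 : kmin a b s n ≤ k := Nat.sInf_le hmem
  obtain ⟨h3, m0, h4⟩ := h1
  refine ⟨h3, h2, ?_⟩
  rw [Nat.cast_sub h2]
  change a * (kmin a b s n : ℤ) + b * m0 * n = s at h4
  exact ⟨b * (m0 - m), by linear_combination h - h4⟩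

lemma pair_count (ha : a ≠ 0)
    (hTau : ∀ z : ℕ, z ≠ 0 → z ≤ RR a b K0 M1 N0 → #z.divisors ≤ Tau) :
    #{t ∈ Icc 1 N0 ×ˢ range K0 | (t.1 : ℤ) ∣ a * (t.2 : ℤ)} ≤ N0 + K0 * Tau := by
  classical
  have hsub : ({t ∈ Icc 1 N0 ×ˢ range K0 | (t.1 : ℤ) ∣ a * (t.2 : ℤ)} : Finset (ℕ × ℕ)) ⊆
      (Icc 1 N0 ×ˢ {0}) ∪ ((Icc 1 (K0 - 1)).biUnion fun δ => (a * (δ : ℤ)).natAbs.divisors ×ˢ {δ}) := by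
    rintro ⟨n, δ⟩ ht
    simp only [mem_filter, mem_product, mem_range] at ht
    obtain ⟨⟨hn, hδ⟩, hd⟩ := ht
    rw [mem_union]
    rcases Nat.eq_zero_or_pos δ with h | h
    · left; simp [h, mem_Icc.1 hn]
    · right
      rw [mem_biUnion]
      refine ⟨δ, mem_Icc.2 ⟨h, by omega⟩, ?_⟩
      rw [mem_product]
      refine ⟨int_dvd_mem ?_ hd, by simp⟩
      have : (δ : ℤ) ≠ 0 := by omega
      positivity
  refine (card_le_card hsub).trans ((card_union_le _ _).trans ?_)
  apply add_le_add
  · simp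
  · refine card_biUnion_le.trans ?_
    have : ∀ δ ∈ Icc 1 (K0 - 1), #((a * (δ : ℤ)).natAbs.divisors ×ˢ ({δ} : Finset ℕ)) ≤ Tau := by
      intro δ hδ
      rw [mem_Icc] at hδ
      rw [card_product, card_singleton, mul_one]
      apply hTau
      · have : (δ : ℤ) ≠ 0 := by omega
        rw [Int.natAbs_ne_zero]; positivity
      · simp only [RR, Int.natAbs_mul, Int.natAbs_natCast]
        refine le_trans ?_ (Nat.le_add_right _ _)
        gcongr; omega
    refine (sum_le_card_nsmul _ _ _ this).trans ?_
    simp only [Nat.card_Icc, smul_eq_mul]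
    gcongr; omega

end
end TT

namespace TT
open Finset

abbrev Q4 := ℕ × ℕ × ℕ × ℕ

def Bx (K0 M1 N0 U0 : ℕ) : Finset Q4 := Icc 1 K0 ×ˢ Icc 1 M1 ×ˢ Icc 1 N0 ×ˢ Icc 1 U0

lemma mem_Bx {K0 M1 N0 U0 k m n u : ℕ} : ((k, m, n, u) : Q4) ∈ Bx K0 M1 N0 U0 ↔
    (1 ≤ k ∧ k ≤ K0) ∧ (1 ≤ m ∧ m ≤ M1) ∧ (1 ≤ n ∧ n ≤ N0) ∧ (1 ≤ u ∧ u ≤ U0) := by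
  simp only [Bx, mem_product, mem_Icc]

def rv (a b : ℤ) (q : Q4) : ℤ := a * (q.1 : ℤ) + b * (q.2.1 : ℤ) * (q.2.2.1 : ℤ)

def wv (q : Q4) : ℕ := q.2.2.2 * q.2.2.1

section
variable (p : ℕ) (a b : ℤ) (K0 M1 N0 U0 Tau : ℕ)

lemma count_main (hp : p.Prime) (ha : ¬ (p : ℤ) ∣ a) (hb : b ≠ 0) (hK : K0 < p) (hN : N0 < p) (hU : U0 < p)
    (hN1 : 1 ≤ N0) (hU1 : 1 ≤ U0)
    (hTau : ∀ z : ℕ, z ≠ 0 → z ≤ 2 * RR a b K0 M1 N0 * U0 * N0 → #z.divisors ≤ Tau) :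
    #{t ∈ Bx K0 M1 N0 U0 ×ˢ Bx K0 M1 N0 U0 | rv a b t.2 ≠ 0 ∧
        (p : ℤ) ∣ rv a b t.1 * wv t.2 - rv a b t.2 * wv t.1} ≤
      (N0 + K0 * Tau) * K0 * U0 * (2 * (2 * RR a b K0 M1 N0 * U0 * N0 / p) + 1) * M1 * Tau ^ 2 := by
  classical
  have hp0 : (p : ℤ) ≠ 0 := by exact_mod_cast hp.ne_zero
  have hpp : (0 : ℤ) < p := by exact_mod_cast hp.pos
  have ha0 : a ≠ 0 := by rintro rfl; simp at ha
  have hpZ := Nat.prime_iff_prime_int.1 hp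
  set R := RR a b K0 M1 N0 with hR
  set H := 2 * R * U0 * N0 / p with hH
  let P : Finset (ℕ × ℕ) := {t ∈ Icc 1 N0 ×ˢ range K0 | (t.1 : ℤ) ∣ a * (t.2 : ℤ)}
  have hP : #P ≤ N0 + K0 * Tau := pair_count a b K0 M1 N0 Tau ha0 (by
    intro z hz hzR
    apply hTau z hz
    refine hzR.trans ?_
    have : 1 ≤ U0 * N0 := Nat.mul_pos hU1 hN1
    calc _ ≤ R * 1 := by rw [mul_one]
      _ ≤ R * (2 * (U0 * N0)) := by gcongr; omega
      _ = _ := by ring)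
  let B := P ×ˢ Icc 1 K0 ×ˢ Icc 1 U0 ×ˢ Icc (-(H : ℤ)) H ×ˢ Icc 1 M1 ×ˢ range Tau ×ˢ range Tau
  have hB : #B ≤ (N0 + K0 * Tau) * K0 * U0 * (2 * H + 1) * M1 * Tau ^ 2 := by
    simp only [B, card_product, Nat.card_Icc, card_range, Int.card_Icc]
    have h1 : ((H : ℤ) + 1 - -(H : ℤ)).toNat = 2 * H + 1 := by omega
    rw [h1]
    simp only [Nat.add_sub_cancel]
    calc _ ≤ (N0 + K0 * Tau) * (K0 * (U0 * ((2 * H + 1) * (M1 * (Tau * Tau))))) := by gcongr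
      _ = _ := by ring
  refine le_trans ?_ hB
  let hh : Q4 × Q4 → ℤ := fun t => (rv a b t.1 * wv t.2 - rv a b t.2 * wv t.1) / p
  let X1 : Q4 × Q4 → ℤ := fun t => a * t.1.1 * wv t.2 - hh t * p
  let X2 : Q4 × Q4 → ℤ := fun t => rv a b t.1 * wv t.2 - hh t * p
  let φ : Q4 × Q4 → (ℕ × ℕ) × ℕ × ℕ × ℤ × ℕ × ℕ × ℕ := fun t =>
    ((t.2.2.2.1, t.2.1 - kmin a b (rv a b t.2) t.2.2.2.1), t.1.1, t.2.2.2.2, hh t, t.1.2.1,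
      idx (X1 t).natAbs t.1.2.2.1, idx (X2 t).natAbs t.1.2.2.2)
  have key : ∀ t ∈ ({t ∈ Bx K0 M1 N0 U0 ×ˢ Bx K0 M1 N0 U0 | rv a b t.2 ≠ 0 ∧
        (p : ℤ) ∣ rv a b t.1 * wv t.2 - rv a b t.2 * wv t.1} : Finset _),
      φ t ∈ B ∧ t.1.2.2.1 ∈ (X1 t).natAbs.divisors ∧ t.1.2.2.2 ∈ (X2 t).natAbs.divisors ∧
      X2 t = rv a b t.2 * wv t.1 ∧ 1 ≤ wv t.1 ∧ kmin a b (rv a b t.2) t.2.2.2.1 ≤ t.2.1 ∧ 1 ≤ t.2.2.2.1 := by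
    rintro ⟨⟨k, m, n, u⟩, k', m', n', u'⟩ ht
    rw [mem_filter, mem_product, mem_Bx, mem_Bx] at ht
    obtain ⟨⟨⟨⟨hk1, hk2⟩, ⟨hm1, hm2⟩, ⟨hn1, hn2⟩, hu1, hu2⟩, ⟨hk1', hk2'⟩, ⟨hm1', hm2'⟩, ⟨hn1', hn2'⟩, hu1', hu2'⟩, hs, h, hh'⟩ := ht
    have hhe : hh ((k, m, n, u), k', m', n', u') = h := by
      simp only [hh]; rw [hh', Int.mul_ediv_cancel_left _ hp0]
    simp only [X1, X2, φ, hhe]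
    simp only [rv, wv] at hh' hs ⊢
    push_cast at hh' hs ⊢
    have hr := abs_rr a b K0 M1 N0 hk2 hm2 hn2
    have hs' := abs_rr a b K0 M1 N0 hk2' hm2' hn2'
    rw [← hR] at hr hs'
    set s : ℤ := a * k' + b * m' * n' with hsdef
    set r : ℤ := a * k + b * m * n with hrdef
    have e2 : r * (u' * n') - h * p = s * (u * n) := by linarith
    have e1 : a * k * (u' * n') - h * p = n * (s * u - b * m * (u' * n')) := by
      rw [hrdef] at hh'; linarith
    have hun : (0 : ℤ) < u * n := by positivity
    have hX2 : s * (u * n) ≠ 0 := mul_ne_zero hs hun.ne'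
    have hnd : ∀ x : ℕ, 1 ≤ x → x < p → ¬ (p : ℤ) ∣ x := by
      intro x hx hxp hd
      have := Nat.le_of_dvd hx (Int.natCast_dvd_natCast.1 hd)
      omega
    have hX1 : a * k * (u' * n') - h * p ≠ 0 := by
      intro h0
      have : (p : ℤ) ∣ a * k * (u' * n') := ⟨h, by linarith⟩
      rcases hpZ.dvd_or_dvd this with h1 | h1
      · rcases hpZ.dvd_or_dvd h1 with h2 | h2
        · exact ha h2
        · exact hnd k hk1 (by omega) h2
      · rcases hpZ.dvd_or_dvd h1 with h2 | h2
        · exact hnd u' hu1' (by omega) h2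
        · exact hnd n' hn1' (by omega) h2
    have hr1 : |r * (u' * n')| ≤ R * (U0 * N0) := by
      rw [abs_mul, abs_of_nonneg (by positivity : (0 : ℤ) ≤ u' * n')]
      gcongr
    have hs1 : |s * (u * n)| ≤ R * (U0 * N0) := by
      rw [abs_mul, abs_of_nonneg hun.le]
      gcongr
    have hh2 : |h| ≤ H := by
      have h1 : |(p : ℤ) * h| ≤ 2 * R * U0 * N0 := by
        rw [← hh']
        refine (abs_sub _ _).trans ?_
        linarith
      rw [abs_mul, abs_of_pos hpp] at h1
      rw [hH]; push_cast
      rw [Int.le_ediv_iff_mul_le hpp]; linarith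
    have hX1b : (a * k * (u' * n') - h * p).natAbs ≤ 2 * R * U0 * N0 := by
      have : |a * k * (u' * n') - h * p| ≤ 2 * R * U0 * N0 := by
        have e3 : a * k * (u' * n') - h * p = s * (u * n) - b * m * n * (u' * n') := by rw [e1]; ring
        rw [e3]
        have h4 : |b * m * n * (u' * n')| ≤ R * (U0 * N0) := by
          rw [abs_mul, abs_of_nonneg (by positivity : (0 : ℤ) ≤ u' * n')]
          have : |b * m * n| ≤ R := by
            simp only [hR, RR, abs_mul, Nat.abs_cast]
            push_cast
            simp only [Int.abs_eq_natAbs]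
            have h5 : (0 : ℤ) ≤ (a.natAbs : ℤ) * K0 := by positivity
            refine le_trans ?_ (le_add_of_nonneg_left h5)
            gcongr
          gcongr
        refine (abs_sub _ _).trans ?_
        linarith
      rw [Int.abs_eq_natAbs] at this
      exact_mod_cast this
    have hX2b : (s * (u * n)).natAbs ≤ 2 * R * U0 * N0 := by
      rw [Int.abs_eq_natAbs] at hs1
      have : (s * (u * n)).natAbs ≤ R * (U0 * N0) := by exact_mod_cast hs1
      refine this.trans ?_
      have : 2 * R * U0 * N0 = 2 * (R * (U0 * N0)) := by ring
      omega
    have d1 : n ∈ (a * k * (u' * n') - h * p).natAbs.divisors := int_dvd_mem hX1 ⟨_, e1⟩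
    have d2 : u ∈ (s * (u * n)).natAbs.divisors := int_dvd_mem hX2 ⟨s * n, by ring⟩
    have hkm := kmin_spec a b (s := s) (n := n') (m := m') hk1' rfl
    rw [e2]
    refine ⟨?_, d1, d2, rfl, Nat.mul_pos hu1 hn1, hkm.2.1, hn1'⟩
    simp only [B, P, mem_product, mem_filter, mem_Icc, mem_range]
    refine ⟨⟨⟨⟨hn1', hn2'⟩, by omega⟩, hkm.2.2⟩, ⟨hk1, hk2⟩, ⟨hu1', hu2'⟩, abs_le.1 hh2, ⟨hm1, hm2⟩, ?_, ?_⟩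
    · exact (idx_lt d1).trans_le (hTau _ (by simpa using hX1) hX1b)
    · exact (idx_lt d2).trans_le (hTau _ (by simpa using hX2) hX2b)
  apply card_le_card_of_injOn φ
  · intro t ht; exact (key t ht).1
  · intro t1 ht1 t2 ht2 heq
    obtain ⟨-, a1, a2, a3, a4, a5, a6⟩ := key t1 ht1
    obtain ⟨-, b1, b2, b3, b4, b5, b6⟩ := key t2 ht2
    obtain ⟨⟨k1, m1, n1, u1⟩, k1', m1', n1', u1'⟩ := t1
    obtain ⟨⟨k2, m2, n2, u2⟩, k2', m2', n2', u2'⟩ := t2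
    simp only [φ, Prod.mk.injEq] at heq
    obtain ⟨⟨e1, e2⟩, e3, e4, e5, e6, e7, e8⟩ := heq
    simp only at a1 a2 a5 a6 b1 b2 b5 b6
    subst e1 e3 e4 e6
    have hX1 : X1 ((k1, m1, n1, u1), k1', m1', n1', u1') = X1 ((k1, m1, n2, u2), k2', m2', n1', u1') := by
      simp only [X1, e5, wv]
    rw [hX1] at e7 a1
    obtain rfl := idx_inj a1 b1 e7
    have hX2 : X2 ((k1, m1, n1, u1), k1', m1', n1', u1') = X2 ((k1, m1, n1, u2), k2', m2', n1', u1') := by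
      simp only [X2, e5, wv, rv]
    rw [hX2] at e8 a2 a3
    obtain rfl := idx_inj a2 b2 e8
    rw [a3] at b3
    have hw : (wv (k1, m1, n1, u1) : ℤ) ≠ 0 := by simp only at a4; omega
    have hs := mul_right_cancel₀ hw b3
    have hn : rv a b (k1', m1', n1', u1') = rv a b (k2', m2', n1', u1') := hs
    rw [hn] at e2 a5
    have hk : k1' = k2' := by omega
    subst hk
    simp only [rv] at hn
    have h1 : b * (n1' : ℤ) ≠ 0 := mul_ne_zero hb (by omega)
    have h2 : (m1' : ℤ) = m2' := by
      apply mul_left_cancel₀ h1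
      linarith
    have h3 : m1' = m2' := by exact_mod_cast h2
    rw [h3]

end
end TT

namespace TT
open Finset
section
variable (p : ℕ) (a b : ℤ) (K0 M1 N0 U0 Tau : ℕ)

lemma count_deg (hp : p.Prime) (ha : ¬ (p : ℤ) ∣ a) (hb : b ≠ 0) (hK : K0 < p) (hN : N0 < p) (hU : U0 < p)
    (hTau : ∀ z : ℕ, z ≠ 0 → z ≤ RR a b K0 M1 N0 → #z.divisors ≤ Tau) :
    #{t ∈ Bx K0 M1 N0 U0 ×ˢ Bx K0 M1 N0 U0 | ¬ rv a b t.2 ≠ 0 ∧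
        (p : ℤ) ∣ rv a b t.1 * wv t.2 - rv a b t.2 * wv t.1} ≤
      (K0 * (2 * (RR a b K0 M1 N0 / p) + 1) * Tau ^ 2) * (K0 * 1 * Tau ^ 2) * (U0 * U0) := by
  classical
  have hpZ := Nat.prime_iff_prime_int.1 hp
  have hpp : (0 : ℤ) < p := by exact_mod_cast hp.pos
  set R := RR a b K0 M1 N0 with hR
  set H := R / p with hH
  have c1 := count_zero p a b K0 M1 N0 Tau hp ha hb hK hTau (Icc (-(H : ℤ)) H)
  have c2 := count_zero p a b K0 M1 N0 Tau hp ha hb hK hTau {0}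
  rw [card_singleton] at c2
  have h1 : #(Icc (-(H : ℤ)) H) = 2 * H + 1 := by rw [Int.card_Icc]; omega
  rw [h1] at c1
  set A1 := ({t ∈ Icc 1 K0 ×ˢ Icc 1 M1 ×ˢ Icc 1 N0 | ∃ h ∈ Icc (-(H : ℤ)) H, a * (t.1 : ℤ) + b * t.2.1 * t.2.2 = h * p} : Finset (ℕ × ℕ × ℕ)) with hA1
  set A2 := ({t ∈ Icc 1 K0 ×ˢ Icc 1 M1 ×ˢ Icc 1 N0 | ∃ h ∈ ({0} : Finset ℤ), a * (t.1 : ℤ) + b * t.2.1 * t.2.2 = h * p} : Finset (ℕ × ℕ × ℕ)) with hA2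
  calc _ ≤ #((A1 ×ˢ A2) ×ˢ (Icc 1 U0 ×ˢ Icc 1 U0)) := by
        apply card_le_card_of_injOn (fun t : Q4 × Q4 => (((t.1.1, t.1.2.1, t.1.2.2.1), (t.2.1, t.2.2.1, t.2.2.2.1)), (t.1.2.2.2, t.2.2.2.2)))
        · rintro ⟨⟨k, m, n, u⟩, k', m', n', u'⟩ ht
          rw [mem_coe, mem_filter, mem_product, mem_Bx, mem_Bx] at ht
          obtain ⟨⟨⟨⟨hk1, hk2⟩, ⟨hm1, hm2⟩, ⟨hn1, hn2⟩, hu1, hu2⟩, ⟨hk1', hk2'⟩, ⟨hm1', hm2'⟩, ⟨hn1', hn2'⟩, hu1', hu2'⟩, hs, hd⟩ := ht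
          rw [not_not] at hs
          rw [hs, zero_mul, sub_zero] at hd
          have hr := abs_rr a b K0 M1 N0 hk2 hm2 hn2
          rw [← hR] at hr
          simp only [rv, wv] at hd hs
          push_cast at hd
          have hnd : ∀ x : ℕ, 1 ≤ x → x < p → ¬ (p : ℤ) ∣ x := by
            intro x hx hxp hd
            have := Nat.le_of_dvd hx (Int.natCast_dvd_natCast.1 hd)
            omega
          have hd2 : (p : ℤ) ∣ a * k + b * m * n := by
            rcases hpZ.dvd_or_dvd hd with h2 | h2
            · exact h2
            · exfalso
              rcases hpZ.dvd_or_dvd h2 with h2 | h2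
              · exact hnd u' hu1' (by omega) h2
              · exact hnd n' hn1' (by omega) h2
          obtain ⟨h, hh⟩ := hd2
          have hh2 : |h| ≤ H := by
            rw [hh, abs_mul, abs_of_pos hpp] at hr
            rw [hH]; push_cast
            rw [Int.le_ediv_iff_mul_le hpp]; linarith
          rw [mem_coe, mem_product, mem_product, mem_product]
          simp only [hA1, hA2, mem_filter, mem_product, mem_Icc, mem_singleton]
          exact ⟨⟨⟨⟨⟨hk1, hk2⟩, ⟨hm1, hm2⟩, ⟨hn1, hn2⟩⟩, h, abs_le.1 hh2, by rw [hh]; ring⟩,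
            ⟨⟨⟨hk1', hk2'⟩, ⟨hm1', hm2'⟩, ⟨hn1', hn2'⟩⟩, 0, rfl, by rw [hs]; ring⟩⟩, ⟨hu1, hu2⟩, hu1', hu2'⟩
        · rintro ⟨⟨k, m, n, u⟩, k', m', n', u'⟩ - ⟨⟨k2, m2, n2, u2⟩, k2', m2', n2', u2'⟩ - heq
          simp only [Prod.mk.injEq] at heq ⊢
          tauto
    _ ≤ _ := by
        simp only [card_product, Nat.card_Icc, Nat.add_sub_cancel]
        gcongr

theorem count_E (hp : p.Prime) (ha : ¬ (p : ℤ) ∣ a) (hb : b ≠ 0) (hK : K0 < p) (hN : N0 < p) (hU : U0 < p)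
    (hN1 : 1 ≤ N0) (hU1 : 1 ≤ U0) (hUM : U0 ≤ M1) (hT1 : 1 ≤ Tau)
    (hTau : ∀ z : ℕ, z ≠ 0 → z ≤ 2 * RR a b K0 M1 N0 * U0 * N0 → #z.divisors ≤ Tau) :
    #{t ∈ Bx K0 M1 N0 U0 ×ˢ Bx K0 M1 N0 U0 | 
        (p : ℤ) ∣ rv a b t.1 * wv t.2 - rv a b t.2 * wv t.1} ≤
      2 * ((N0 + K0) * K0 * U0 * M1 * (2 * (2 * RR a b K0 M1 N0 * U0 * N0 / p) + 1) * Tau ^ 4) := by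
  classical
  have c1 := count_main p a b K0 M1 N0 U0 Tau hp ha hb hK hN hU hN1 hU1 hTau
  have hRle : RR a b K0 M1 N0 ≤ 2 * RR a b K0 M1 N0 * U0 * N0 := by
    have : 1 ≤ U0 * N0 := Nat.mul_pos hU1 hN1
    calc _ ≤ RR a b K0 M1 N0 * 1 := by rw [mul_one]
      _ ≤ RR a b K0 M1 N0 * (2 * (U0 * N0)) := by gcongr; omega
      _ = _ := by ring
  have c2 := count_deg p a b K0 M1 N0 U0 Tau hp ha hb hK hN hU (fun z hz hzR => hTau z hz (hzR.trans hRle))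
  set S := ({t ∈ Bx K0 M1 N0 U0 ×ˢ Bx K0 M1 N0 U0 | 
        (p : ℤ) ∣ rv a b t.1 * wv t.2 - rv a b t.2 * wv t.1} : Finset (Q4 × Q4)) with hS
  have h0 : #S = #{t ∈ S | rv a b t.2 ≠ 0} + #{t ∈ S | ¬ rv a b t.2 ≠ 0} := 
    (card_filter_add_card_filter_not _).symm
  have h1 : ({t ∈ S | rv a b t.2 ≠ 0} : Finset _) = {t ∈ Bx K0 M1 N0 U0 ×ˢ Bx K0 M1 N0 U0 | rv a b t.2 ≠ 0 ∧
        (p : ℤ) ∣ rv a b t.1 * wv t.2 - rv a b t.2 * wv t.1} := by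
    rw [hS, filter_filter]; simp only [and_comm]
  have h2 : ({t ∈ S | ¬ rv a b t.2 ≠ 0} : Finset _) = {t ∈ Bx K0 M1 N0 U0 ×ˢ Bx K0 M1 N0 U0 | ¬ rv a b t.2 ≠ 0 ∧
        (p : ℤ) ∣ rv a b t.1 * wv t.2 - rv a b t.2 * wv t.1} := by
    rw [hS, filter_filter]; simp only [and_comm]
  rw [h0, h1, h2]
  set R := RR a b K0 M1 N0
  have hH : R / p ≤ 2 * R * U0 * N0 / p := Nat.div_le_div_right hRle
  set H := 2 * R * U0 * N0 / p
  have d1 : (N0 + K0 * Tau) * K0 * U0 * (2 * H + 1) * M1 * Tau ^ 2 ≤ (N0 + K0) * K0 * U0 * M1 * (2 * H + 1) * Tau ^ 4 := by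
    calc _ ≤ ((N0 + K0) * Tau) * K0 * U0 * (2 * H + 1) * M1 * Tau ^ 2 := by
          gcongr; nlinarith
      _ = (N0 + K0) * K0 * U0 * M1 * (2 * H + 1) * Tau ^ 3 := by ring
      _ ≤ _ := by gcongr <;> omega
  have d2 : (K0 * (2 * (R / p) + 1) * Tau ^ 2) * (K0 * 1 * Tau ^ 2) * (U0 * U0) ≤ (N0 + K0) * K0 * U0 * M1 * (2 * H + 1) * Tau ^ 4 := by
    calc _ = K0 * K0 * U0 * U0 * (2 * (R / p) + 1) * Tau ^ 4 := by ring
      _ ≤ _ := by gcongr; omega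
  omega
end
end TT

open Finset
namespace TT

lemma shift1 (f : ℤ → ℂ) (M0 d : ℕ) (hd : d ≤ M0) :
    ∑ m ∈ Icc 1 M0, f (m : ℤ) =
      ∑ m ∈ Icc 1 (2 * M0), if (d + 1 ≤ m ∧ m ≤ M0 + d) then f ((m : ℤ) - d) else 0 := by
  rw [← sum_filter]
  refine sum_nbij (fun m => m + d) ?_ ?_ ?_ ?_
  · intro m hm
    simp only [mem_Icc, mem_filter] at hm ⊢
    omega
  · intro x _ y _ h
    simpa using h
  · intro m hm
    simp only [coe_filter, mem_Icc, Set.mem_ofPred_eq] at hm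
    refine ⟨m - d, ?_, ?_⟩
    · simp only [coe_Icc, Set.mem_Icc]; omega
    · show m - d + d = m
      omega
  · intro m _
    push_cast
    congr 1
    ring

lemma shift2 (f : ℤ → ℂ) (M0 U0 V0 : ℕ) (hd : U0 * V0 ≤ M0) :
    ((U0 * V0 : ℕ) : ℂ) * ∑ m ∈ Icc 1 M0, f (m : ℤ) =
      ∑ m ∈ Icc 1 (2 * M0), ∑ u ∈ Icc 1 U0, ∑ v ∈ Icc 1 V0,
        if (u * v + 1 ≤ m ∧ m ≤ M0 + u * v) then f ((m : ℤ) - (u * v : ℕ)) else 0 := by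
  have h : ∀ u ∈ Icc 1 U0, ∀ v ∈ Icc 1 V0, ∑ m ∈ Icc 1 M0, f (m : ℤ) =
      ∑ m ∈ Icc 1 (2 * M0), if (u * v + 1 ≤ m ∧ m ≤ M0 + u * v) then f ((m : ℤ) - (u * v : ℕ)) else 0 := by
    intro u hu v hv
    rw [mem_Icc] at hu hv
    exact shift1 f M0 (u * v) ((Nat.mul_le_mul hu.2 hv.2).trans hd)
  calc ((U0 * V0 : ℕ) : ℂ) * ∑ m ∈ Icc 1 M0, f (m : ℤ)
      = ∑ u ∈ Icc 1 U0, ∑ v ∈ Icc 1 V0, ∑ m ∈ Icc 1 M0, f (m : ℤ) := by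
        simp [mul_assoc]
    _ = ∑ u ∈ Icc 1 U0, ∑ v ∈ Icc 1 V0, ∑ m ∈ Icc 1 (2 * M0),
        if (u * v + 1 ≤ m ∧ m ≤ M0 + u * v) then f ((m : ℤ) - (u * v : ℕ)) else 0 :=
        sum_congr rfl fun u hu => sum_congr rfl fun v hv => h u hu v hv
    _ = ∑ u ∈ Icc 1 U0, ∑ m ∈ Icc 1 (2 * M0), ∑ v ∈ Icc 1 V0,
        if (u * v + 1 ≤ m ∧ m ≤ M0 + u * v) then f ((m : ℤ) - (u * v : ℕ)) else 0 :=
        sum_congr rfl fun u hu => sum_comm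
    _ = _ := sum_comm

lemma interval_v (M0 V0 u m : ℕ) (hu : 1 ≤ u) :
    ∃ s t : ℕ, s ≤ t ∧ t ≤ V0 + 1 ∧
      {v ∈ Icc 1 V0 | u * v + 1 ≤ m ∧ m ≤ M0 + u * v} = Ico s t := by
  set t := min V0 ((m - 1) / u) + 1 with ht
  set s := max 1 ((m - M0 + (u - 1)) / u) with hs
  refine ⟨min s t, t, min_le_right _ _, by omega, ?_⟩
  ext v
  simp only [mem_filter, mem_Icc, mem_Ico]
  have h1 : v ≤ (m - 1) / u ↔ v * u ≤ m - 1 := Nat.le_div_iff_mul_le hu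
  have h2 : (m - M0 + (u - 1)) / u < v + 1 ↔ m - M0 + (u - 1) < (v + 1) * u :=
    Nat.div_lt_iff_lt_mul hu
  have h3 : (v + 1) * u = u * v + u := by ring
  have h4 : v * u = u * v := by ring
  rw [h3] at h2
  rw [h4] at h1
  have h5 : v = 0 ∨ 0 < u * v := by
    rcases Nat.eq_zero_or_pos v with h | h
    · exact Or.inl h
    · exact Or.inr (Nat.mul_pos hu h)
  generalize u * v = w at *
  generalize (m - M0 + (u - 1)) / u = A at *
  generalize (m - 1) / u = B at *
  omega

variable {p : ℕ} [Fact p.Prime]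

noncomputable def xv (p : ℕ) [Fact p.Prime] (a b : ℤ) (q : Q4) : ZMod p :=
  ((rv a b q : ℤ) : ZMod p) * ((b : ZMod p) * (wv q : ZMod p))⁻¹

lemma inner_bound (χ : MulChar (ZMod p) ℂ) (T : ZMod p → ℝ) (V0 : ℕ)
    (hT : ∀ x, ∀ s t : ℕ, s ≤ t → t ≤ V0 + 1 → ‖∑ v ∈ Ico s t, χ (x - (v : ZMod p))‖ ≤ T x)
    (a b : ℤ) (k m n u M0 : ℕ) (hu : 1 ≤ u) 
    (hb : (b : ZMod p) ≠ 0) (hu' : (u : ZMod p) ≠ 0) (hn' : (n : ZMod p) ≠ 0) :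
    ‖∑ v ∈ Icc 1 V0, (if (u * v + 1 ≤ m ∧ m ≤ M0 + u * v) then
        χ ((a * k + b * ((m : ℤ) - (u * v : ℕ)) * n : ℤ) : ZMod p) else 0)‖
      ≤ T (xv p a b (k, m, n, u)) := by
  obtain ⟨s, t, hst, ht, hI⟩ := interval_v M0 V0 u m hu
  rw [← sum_filter, hI]
  set x := xv p a b (k, m, n, u) with hx
  have h : ∀ v : ℕ, χ ((a * k + b * ((m : ℤ) - (u * v : ℕ)) * n : ℤ) : ZMod p) =
      χ ((b : ZMod p) * (u * n)) * χ (x - v) := by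
    intro v
    rw [← map_mul]
    congr 1
    simp only [hx, xv, rv, wv]
    push_cast
    field_simp
    ring
  simp_rw [h]
  rw [← mul_sum, norm_mul]
  have h1 : ‖χ ((b : ZMod p) * (u * n))‖ ≤ 1 := DirichletCharacter.norm_le_one χ _
  calc _ ≤ 1 * ‖∑ v ∈ Ico s t, χ (x - (v : ZMod p))‖ := by gcongr
    _ ≤ _ := by rw [one_mul]; exact hT x s t hst ht

lemma xv_eq_iff (a b : ℤ) (q q' : Q4) (hb : (b : ZMod p) ≠ 0)
    (h : (wv q : ZMod p) ≠ 0) (h' : (wv q' : ZMod p) ≠ 0) :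
    xv p a b q = xv p a b q' ↔ (p : ℤ) ∣ rv a b q * wv q' - rv a b q' * wv q := by
  rw [← ZMod.intCast_zmod_eq_zero_iff_dvd]
  push_cast
  rw [sub_eq_zero]
  simp only [xv]
  generalize (wv q : ZMod p) = w at *
  generalize (wv q' : ZMod p) = w' at *
  generalize ((rv a b q : ℤ) : ZMod p) = y at *
  generalize ((rv a b q' : ℤ) : ZMod p) = y' at *
  rw [← div_eq_mul_inv, ← div_eq_mul_inv, div_eq_div_iff (mul_ne_zero hb h) (mul_ne_zero hb h')]
  constructor
  · intro e
    apply mul_left_cancel₀ hb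
    linear_combination e
  · intro e
    linear_combination (b : ZMod p) * e

lemma holder_step {X : Type*} [Fintype X] [DecidableEq X] {Q : Type*} (B : Finset Q)
    (x : Q → X) (T : X → ℝ) (hT : ∀ y, 0 ≤ T y) (r : ℕ) (hr : 0 < r) :
    (∑ q ∈ B, T (x q)) ^ (2 * r) ≤
      (#B : ℝ) ^ (2 * r - 2) * (#{t ∈ B ×ˢ B | x t.1 = x t.2} : ℝ) * ∑ y, T y ^ (2 * r) := by
  obtain ⟨s, rfl⟩ : ∃ s, r = s + 1 := ⟨r - 1, by omega⟩
  have h1 : (∑ q ∈ B, T (x q)) ^ (s + 1) ≤ (#B : ℝ) ^ s * ∑ q ∈ B, T (x q) ^ (s + 1) := by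
    rcases B.eq_empty_or_nonempty with rfl | hB
    · simp
    have hc : (0 : ℝ) < (#B : ℝ) := by exact_mod_cast hB.card_pos
    have := pow_sum_div_card_le_sum_pow (s := B) (f := fun q => T (x q)) (fun q _ => hT _) s
    rw [div_le_iff₀ (by positivity)] at this
    linarith
  set nu : X → ℝ := fun y => ∑ q ∈ B, if x q = y then 1 else 0 with hnu
  have h2 : ∑ q ∈ B, T (x q) ^ (s + 1) = ∑ y, nu y * T y ^ (s + 1) := by
    simp only [hnu, sum_mul]
    rw [sum_comm]
    refine sum_congr rfl fun q _ => ?_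
    simp
  have h3 : ∑ y, nu y ^ 2 = (#{t ∈ B ×ˢ B | x t.1 = x t.2} : ℝ) := by
    rw [card_filter, sum_product]
    push_cast
    simp only [hnu, sq, sum_mul_sum]
    rw [sum_comm]
    refine sum_congr rfl fun q _ => ?_
    rw [sum_comm]
    refine sum_congr rfl fun q' _ => ?_
    simp [eq_comm]
  have h4 := sum_mul_sq_le_sq_mul_sq univ nu (fun y => T y ^ (s + 1))
  rw [← h2, h3] at h4
  have e1 : 2 * (s + 1) - 2 = s * 2 := by omega
  calc (∑ q ∈ B, T (x q)) ^ (2 * (s + 1)) = ((∑ q ∈ B, T (x q)) ^ (s + 1)) ^ 2 := by ring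
    _ ≤ ((#B : ℝ) ^ s * ∑ q ∈ B, T (x q) ^ (s + 1)) ^ 2 := by
      have : 0 ≤ ∑ q ∈ B, T (x q) := sum_nonneg fun q _ => hT _
      gcongr
    _ = (#B : ℝ) ^ (s * 2) * (∑ q ∈ B, T (x q) ^ (s + 1)) ^ 2 := by ring
    _ ≤ (#B : ℝ) ^ (s * 2) * (_ * _) := by gcongr
    _ = _ := by
      rw [e1, ← mul_assoc]
      congr 1
      refine sum_congr rfl fun y _ => ?_
      ring

end TT

open Finset
namespace TT

lemma combine {p : ℕ} [Fact p.Prime] (χ : MulChar (ZMod p) ℂ) (T : ZMod p → ℝ) (V0 : ℕ)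
    (hT0 : ∀ x, 0 ≤ T x)
    (hT : ∀ x, ∀ s t : ℕ, s ≤ t → t ≤ V0 + 1 → ‖∑ v ∈ Ico s t, χ (x - (v : ZMod p))‖ ≤ T x)
    (r : ℕ) (hr : 0 < r)
    (a b : ℤ) (K0 M0 N0 U0 : ℕ) (hb : ¬ (p : ℤ) ∣ b) (hN : N0 < p) (hU : U0 < p)
    (hUV : U0 * V0 ≤ M0) (β : ℕ → ℕ → ℂ) (hβ : ∀ k n, ‖β k n‖ ≤ 1) :
    (((U0 * V0 : ℕ) : ℝ) * ‖∑ k ∈ Icc 1 K0, ∑ m ∈ Icc 1 M0, ∑ n ∈ Icc 1 N0,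
          β k n * χ ((a * k + b * m * n : ℤ) : ZMod p)‖) ^ (2 * r) ≤
      (#(Bx K0 (2 * M0) N0 U0) : ℝ) ^ (2 * r - 2) *
      (#{t ∈ Bx K0 (2 * M0) N0 U0 ×ˢ Bx K0 (2 * M0) N0 U0 |
        (p : ℤ) ∣ rv a b t.1 * wv t.2 - rv a b t.2 * wv t.1} : ℝ) * ∑ y, T y ^ (2 * r) := by
  have hbz : (b : ZMod p) ≠ 0 := by
    rwa [Ne, ZMod.intCast_zmod_eq_zero_iff_dvd]
  have hnz : ∀ n : ℕ, 1 ≤ n → n < p → (n : ZMod p) ≠ 0 := by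
    intro n h1 h2 h3
    rw [ZMod.natCast_eq_zero_iff] at h3
    exact absurd (Nat.le_of_dvd h1 h3) (by omega)
  have hw : ∀ q ∈ Bx K0 (2 * M0) N0 U0, (wv q : ZMod p) ≠ 0 := by
    rintro ⟨k, m, n, u⟩ hq
    rw [mem_Bx] at hq
    simp only [wv, Nat.cast_mul]
    exact mul_ne_zero (hnz u (by omega) (by omega)) (hnz n (by omega) (by omega))
  have hE : {t ∈ Bx K0 (2 * M0) N0 U0 ×ˢ Bx K0 (2 * M0) N0 U0 |
        (p : ℤ) ∣ rv a b t.1 * wv t.2 - rv a b t.2 * wv t.1} =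
      {t ∈ Bx K0 (2 * M0) N0 U0 ×ˢ Bx K0 (2 * M0) N0 U0 | xv p a b t.1 = xv p a b t.2} := by
    refine filter_congr fun t ht => ?_
    rw [mem_product] at ht
    exact (xv_eq_iff a b t.1 t.2 hbz (hw _ ht.1) (hw _ ht.2)).symm
  rw [hE]
  refine le_trans ?_ (holder_step (Bx K0 (2 * M0) N0 U0) (xv p a b) T hT0 r hr)
  refine pow_le_pow_left₀ (by positivity) ?_ _
  have e1 : ((U0 * V0 : ℕ) : ℝ) * ‖∑ k ∈ Icc 1 K0, ∑ m ∈ Icc 1 M0, ∑ n ∈ Icc 1 N0,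
          β k n * χ ((a * k + b * m * n : ℤ) : ZMod p)‖ =
      ‖((U0 * V0 : ℕ) : ℂ) * ∑ k ∈ Icc 1 K0, ∑ m ∈ Icc 1 M0, ∑ n ∈ Icc 1 N0,
          β k n * χ ((a * k + b * m * n : ℤ) : ZMod p)‖ := by
    rw [norm_mul, Complex.norm_natCast]
  rw [e1]
  have e2 : ((U0 * V0 : ℕ) : ℂ) * ∑ k ∈ Icc 1 K0, ∑ m ∈ Icc 1 M0, ∑ n ∈ Icc 1 N0,
          β k n * χ ((a * k + b * m * n : ℤ) : ZMod p) =
      ∑ k ∈ Icc 1 K0, ∑ n ∈ Icc 1 N0, ∑ m ∈ Icc 1 (2 * M0), ∑ u ∈ Icc 1 U0, β k n *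
        ∑ v ∈ Icc 1 V0, (if (u * v + 1 ≤ m ∧ m ≤ M0 + u * v) then
        χ ((a * k + b * ((m : ℤ) - (u * v : ℕ)) * n : ℤ) : ZMod p) else 0) := by
    rw [mul_sum]
    refine sum_congr rfl fun k _ => ?_
    rw [sum_comm, mul_sum]
    refine sum_congr rfl fun n _ => ?_
    rw [← mul_sum, mul_left_comm,
      shift2 (fun m => χ ((a * k + b * m * n : ℤ) : ZMod p)) M0 U0 V0 hUV, mul_sum]
    refine sum_congr rfl fun m _ => ?_
    rw [mul_sum]
  rw [e2]
  have e3 : ∑ q ∈ Bx K0 (2 * M0) N0 U0, T (xv p a b q) =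
      ∑ k ∈ Icc 1 K0, ∑ n ∈ Icc 1 N0, ∑ m ∈ Icc 1 (2 * M0), ∑ u ∈ Icc 1 U0,
        T (xv p a b (k, m, n, u)) := by
    rw [Bx, sum_product]
    refine sum_congr rfl fun k _ => ?_
    rw [sum_product, sum_comm]
    rw [sum_product]
    refine sum_congr rfl fun n _ => ?_
    rw [sum_comm]
  rw [e3]
  refine norm_sum_le_of_le _ fun k _ => norm_sum_le_of_le _ fun n hn =>
    norm_sum_le_of_le _ fun m _ => norm_sum_le_of_le _ fun u hu => ?_
  rw [mem_Icc] at hn hu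
  rw [norm_mul]
  have := inner_bound χ T V0 hT a b k m n u M0 hu.1 hbz (hnz u hu.1 (by omega))
    (hnz n hn.1 (by omega))
  calc _ ≤ 1 * _ := mul_le_mul (hβ k n) this (norm_nonneg _) zero_le_one
    _ = _ := one_mul _

end TT

open Finset
namespace TT

lemma numeric_id (s : ℕ) (P K M N W sq Tau4 Ce : ℝ) (hP : 0 < P) (hK : 0 < K) (hM : 0 < M)
    (hN : 0 < N) :
    (K * (2 * M) * N * (M / P)) ^ (2 * s) * (2 * ((N + K) * K * (M / P) * (2 * M) * (8 * W) * Tau4)) *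
      (Ce * (P ^ (2 * s + 2) * sq)) =
    (M / 4) ^ (2 * s + 2) * ((4 ^ (2 * s + 2) * 2 ^ (2 * s) * 32) * Tau4 * Ce *
      (K * M * N) ^ (2 * s + 2) * ((1 + N / K) * W * (sq * P / (M * N) ^ 2))) := by
  have e : ∀ x : ℝ, x ^ (2 * s + 2) = x ^ (2 * s) * x ^ 2 := fun x => pow_add _ _ _
  simp only [e, mul_pow, div_pow]
  generalize 2 * s = t
  have : P ^ t ≠ 0 := by positivity
  have : (4 : ℝ) ^ t ≠ 0 := by positivity
  generalize P ^ t = P' at *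
  generalize (4 : ℝ) ^ t = f at *
  field_simp
  ring

lemma numeric_le (r : ℕ) (hr : 0 < r) (P K M N W sq Tau4 Ce A S B E F : ℝ) (hP : 0 < P) (hK : 0 < K)
    (hM : 0 < M) (hN : 0 < N) (hB0 : 0 ≤ B) (hE0 : 0 ≤ E) (hF0 : 0 ≤ F) (hS : 0 ≤ S)
    (hA : M / 4 ≤ A) (h : (A * S) ^ (2 * r) ≤ B ^ (2 * r - 2) * E * F)
    (hB : B ≤ K * (2 * M) * N * (M / P))
    (hE : E ≤ 2 * ((N + K) * K * (M / P) * (2 * M) * (8 * W) * Tau4))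
    (hF : F ≤ Ce * (P ^ (2 * r) * sq)) :
    S ^ (2 * r) ≤ (4 ^ (2 * r) * 2 ^ (2 * r - 2) * 32) * Tau4 * Ce *
      (K * M * N) ^ (2 * r) * ((1 + N / K) * W * (sq * P / (M * N) ^ 2)) := by
  obtain ⟨s, rfl⟩ : ∃ s, r = s + 1 := ⟨r - 1, by omega⟩
  have e1 : 2 * (s + 1) - 2 = 2 * s := by omega
  have e2 : 2 * (s + 1) = 2 * s + 2 := by omega
  rw [e1] at h ⊢
  rw [e2] at h hF ⊢
  have hpos : 0 < (M / 4) ^ (2 * s + 2) := by positivity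
  refine le_of_mul_le_mul_left ?_ hpos
  rw [← numeric_id s P K M N W sq Tau4 Ce hP hK hM hN, ← mul_pow]
  calc (M / 4 * S) ^ (2 * s + 2) ≤ (A * S) ^ (2 * s + 2) := by gcongr
    _ ≤ _ := h
    _ ≤ _ := by
      apply mul_le_mul _ hF hF0
      · exact mul_nonneg (by positivity) (hE0.trans hE)
      · apply mul_le_mul _ hE hE0 (by positivity)
        gcongr

lemma target_pow (r : ℕ) (hr : 0 < r) (p K M N R ε P : ℝ) (hp : 1 ≤ p) (hK : 0 < K) (hM : 0 < M)
    (hN : 0 < N) (hR : 0 ≤ R) (hP : P = p ^ ((1 : ℝ) / (2 * (r : ℝ)))) (C : ℝ) :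
    (C * (p : ℝ) ^ ε * (K * M * N) *
          ((1 + N / K) ^ ((1 : ℝ) / (2 * (r : ℝ))) *
            (1 + R * M * N *
              (p : ℝ) ^ (-1 - 1 / (2 * (r : ℝ)) : ℝ)) ^ ((1 : ℝ) / (2 * (r : ℝ))) *
            ((p : ℝ) ^ (1 + 1 / (r : ℝ) : ℝ) / (M ^ 4 * N ^ 4)) ^ ((1 : ℝ) / (4 * (r : ℝ))))) ^ (2 * r)
     = C ^ (2 * r) * p ^ (2 * r * ε) * (K * M * N) ^ (2 * r) *
       ((1 + N / K) * (1 + R * M * N / (p * P)) * (Real.sqrt p * P / (M * N) ^ 2)) := by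
  have hp0 : 0 < p := by linarith
  have hr0 : (0 : ℝ) < r := by exact_mod_cast hr
  have hPp : 0 < P := by rw [hP]; positivity
  have hinv : (p : ℝ) ^ (-1 - 1 / (2 * (r : ℝ)) : ℝ) = 1 / (p * P) := by
    rw [Real.rpow_sub hp0, Real.rpow_neg_one, hP]
    field_simp
  have hroot : ∀ x : ℝ, 0 ≤ x → (x ^ ((1 : ℝ) / (2 * (r : ℝ)))) ^ (2 * r) = x := by
    intro x hx
    rw [← Real.rpow_natCast, ← Real.rpow_mul hx]
    push_cast
    rw [one_div_mul_cancel (by positivity), Real.rpow_one]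
  have hlast : (((p : ℝ) ^ (1 + 1 / (r : ℝ) : ℝ) / (M ^ 4 * N ^ 4)) ^ ((1 : ℝ) / (4 * (r : ℝ)))) ^ (2 * r)
      = Real.sqrt p * P / (M * N) ^ 2 := by
    have hx : 0 ≤ (p : ℝ) ^ (1 + 1 / (r : ℝ) : ℝ) / (M ^ 4 * N ^ 4) := by positivity
    rw [← Real.rpow_natCast, ← Real.rpow_mul hx]
    have : (1 : ℝ) / (4 * (r : ℝ)) * ((2 * r : ℕ) : ℝ) = 1 / 2 := by
      push_cast; field_simp; norm_num
    rw [this, ← Real.sqrt_eq_rpow]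
    have hPP : (p : ℝ) ^ (1 + 1 / (r : ℝ) : ℝ) = p * P ^ 2 := by
      rw [Real.rpow_add hp0, Real.rpow_one, hP, ← Real.rpow_natCast, ← Real.rpow_mul hp0.le]
      congr 2
      push_cast
      field_simp
    rw [hPP, Real.sqrt_div (by positivity), Real.sqrt_mul hp0.le, Real.sqrt_sq hPp.le,
      show M ^ 4 * N ^ 4 = ((M * N) ^ 2) ^ 2 by ring, Real.sqrt_sq (by positivity)]
  have hpe : (p ^ ε) ^ (2 * r) = p ^ (2 * r * ε) := by
    rw [← Real.rpow_natCast, ← Real.rpow_mul hp0.le]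
    congr 1
    push_cast; ring
  rw [mul_pow, mul_pow, mul_pow C, mul_pow _ (_ ^ _ : ℝ), mul_pow _ (_ ^ _ : ℝ), hlast, hinv, hpe, hroot _ (by positivity),
    hroot _ (by positivity), mul_one_div]

end TT

open Finset
namespace TT

lemma trivial_bound {p : ℕ} [Fact p.Prime] (χ : MulChar (ZMod p) ℂ) (a b : ℤ) (K0 M0 N0 : ℕ)
    (β : ℕ → ℕ → ℂ) (hβ : ∀ k n, ‖β k n‖ ≤ 1) :
    ‖∑ k ∈ Icc 1 K0, ∑ m ∈ Icc 1 M0, ∑ n ∈ Icc 1 N0,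
          β k n * χ ((a * k + b * m * n : ℤ) : ZMod p)‖ ≤ (K0 : ℝ) * M0 * N0 := by
  calc _ ≤ ∑ k ∈ Icc 1 K0, ∑ m ∈ Icc 1 M0, ∑ n ∈ Icc 1 N0, (1 : ℝ) := by
        refine norm_sum_le_of_le _ fun k _ => norm_sum_le_of_le _ fun n hn =>
          norm_sum_le_of_le _ fun m _ => ?_
        rw [norm_mul]
        exact mul_le_one₀ (hβ _ _) (norm_nonneg _) (DirichletCharacter.norm_le_one χ _)
    _ = _ := by simp [mul_assoc]

lemma core_large (p P K M N R : ℝ) (hp : 1 ≤ p) (hP : 0 < P) (hK : 1 < K) (hM : 1 < M) (hMp : M < p)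
    (hN : 1 < N) (hNp : N < p) (hR : p ^ 3 ≤ R) :
    1 ≤ (1 + N / K) * (1 + R * M * N / (p * P)) * (Real.sqrt p * P / (M * N) ^ 2) := by
  have hs : 1 ≤ Real.sqrt p := Real.one_le_sqrt.2 hp
  have h1 : 1 ≤ 1 + N / K := by
    have : 0 ≤ N / K := by positivity
    linarith
  have h2 : p ^ 2 * (M * N) / P ≤ 1 + R * M * N / (p * P) := by
    have : p ^ 2 * (M * N) / P = p ^ 3 * M * N / (p * P) := by field_simp
    rw [this]
    have : p ^ 3 * M * N / (p * P) ≤ R * M * N / (p * P) := by gcongr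
    linarith
  have hMN : M * N ≤ p ^ 2 := by nlinarith
  calc (1 : ℝ) ≤ p ^ 2 / (M * N) := by rw [le_div_iff₀ (by positivity)]; linarith
    _ = 1 * (p ^ 2 * (M * N) / P) * (1 * P / (M * N) ^ 2) := by field_simp
    _ ≤ _ := by
      have : 0 ≤ p ^ 2 * (M * N) / P := by positivity
      have h3 : 0 ≤ (1 + N / K) * (1 + R * M * N / (p * P)) :=
        mul_nonneg (by linarith) (by linarith)
      gcongr

lemma floor_half (x : ℝ) (hx : 1 ≤ x) : x / 2 ≤ (⌊x⌋₊ : ℝ) := by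
  have h1 : (1 : ℝ) ≤ ⌊x⌋₊ := by exact_mod_cast Nat.le_floor (by simpa using hx)
  have h2 := Nat.lt_floor_add_one x
  linarith

set_option maxHeartbeats 2000000 in
lemma core (r : ℕ) (hr : 0 < r) (ε : ℝ) (hε : 0 < ε) :
    ∃ C : ℝ, 1 ≤ C ∧ ∀ (p : ℕ) [Fact p.Prime],
      ∀ (K M N : ℝ), 1 < K → (K : ℝ) < p → 1 < M → (M : ℝ) < p → 1 < N → (N : ℝ) < p →
      ∀ P : ℝ, P = (p : ℝ) ^ ((1 : ℝ) / (2 * (r : ℝ))) → M > 4 * P →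
      ∀ (a b : ℤ), ¬ ((p : ℤ) ∣ a * b) →
      ∀ (χ : MulChar (ZMod p) ℂ), χ ≠ 1 →
      ∀ (β : ℕ → ℕ → ℂ), (∀ k n, ‖β k n‖ ≤ 1) →
      ‖∑ k ∈ Icc 1 ⌊K⌋₊, ∑ m ∈ Icc 1 ⌊M⌋₊, ∑ n ∈ Icc 1 ⌊N⌋₊,
          β k n * χ ((a * k + b * m * n : ℤ) : ZMod p)‖ ^ (2 * r) ≤
        C * (p : ℝ) ^ (2 * r * ε) * (K * M * N) ^ (2 * r) *
       ((1 + N / K) * (1 + ((|a| : ℝ) * K + (|b| : ℝ) * M * N) * M * N / (p * P)) *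
        (Real.sqrt p * P / (M * N) ^ 2)) := by
  have hr0 : (0 : ℝ) < r := by exact_mod_cast hr
  obtain ⟨C1, hC1, hmax⟩ := maxT r hr (r * ε) (by positivity)
  obtain ⟨C2, hC2, hdiv⟩ := divisor_bound (r * ε / 40) (by positivity)
  refine ⟨max 1 ((4 ^ (2 * r) * 2 ^ (2 * r - 2) * 32) * C2 ^ 4 * C1), le_max_left _ _, ?_⟩
  intro p hpF K M N hK hKp hM hMp hN hNp P hP hMP a b hab χ hχ β hβ
  have hpr : p.Prime := hpF.out
  have hp2 : (2 : ℝ) ≤ p := by exact_mod_cast hpr.two_le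
  have hp0 : (0 : ℝ) < p := by linarith
  have ha : ¬ (p : ℤ) ∣ a := fun h => hab (h.mul_right b)
  have hb : ¬ (p : ℤ) ∣ b := fun h => hab (h.mul_left a)
  have hb0 : b ≠ 0 := by rintro rfl; simp at hb
  have hP1 : 1 ≤ P := by rw [hP]; exact Real.one_le_rpow (by linarith) (by positivity)
  have hPp : P ^ (2 * r) = p := by
    rw [hP, ← Real.rpow_natCast, ← Real.rpow_mul hp0.le]
    push_cast
    rw [one_div_mul_cancel (by positivity), Real.rpow_one]
  have hP0 : 0 < P := by linarith
  set R := (|a| : ℝ) * K + (|b| : ℝ) * M * N with hRdef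
  have hR0 : 0 ≤ R := by positivity
  set S := ‖∑ k ∈ Icc 1 ⌊K⌋₊, ∑ m ∈ Icc 1 ⌊M⌋₊, ∑ n ∈ Icc 1 ⌊N⌋₊,
          β k n * χ ((a * k + b * m * n : ℤ) : ZMod p)‖ with hS
  have hS0 : 0 ≤ S := norm_nonneg _
  have hKf : (⌊K⌋₊ : ℝ) ≤ K := Nat.floor_le (by linarith)
  have hMf : (⌊M⌋₊ : ℝ) ≤ M := Nat.floor_le (by linarith)
  have hNf : (⌊N⌋₊ : ℝ) ≤ N := Nat.floor_le (by linarith)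
  have hpe : 1 ≤ (p : ℝ) ^ (2 * r * ε) := Real.one_le_rpow (by linarith) (by positivity)
  by_cases hbig : (p : ℝ) ^ 3 ≤ R
  · have h1 := core_large p P K M N R (by linarith) hP0 hK hM hMp hN hNp hbig
    have h2 : S ≤ K * M * N := by
      refine (trivial_bound χ a b _ _ _ β hβ).trans ?_
      gcongr
    calc S ^ (2 * r) ≤ (K * M * N) ^ (2 * r) := by gcongr
      _ = 1 * 1 * (K * M * N) ^ (2 * r) * 1 := by ring
      _ ≤ _ := by
        gcongr
        exact le_max_left _ _
  push Not at hbig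
  set U0 := ⌊M / P⌋₊ with hU0
  set V0 := ⌊P⌋₊ with hV0
  have hMP1 : 4 ≤ M / P := by rw [le_div_iff₀ hP0]; linarith
  have hU1 : 1 ≤ U0 := Nat.le_floor (by push_cast; linarith)
  have hV1 : 1 ≤ V0 := Nat.le_floor (by push_cast; linarith)
  have hUf : (U0 : ℝ) ≤ M / P := Nat.floor_le (by positivity)
  have hVf : (V0 : ℝ) ≤ P := Nat.floor_le (by positivity)
  have hUh : M / P / 2 ≤ U0 := floor_half _ (by linarith)
  have hVh : P / 2 ≤ V0 := floor_half _ hP1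
  have hVp : V0 ^ (2 * r) ≤ p := by
    have : (V0 : ℝ) ^ (2 * r) ≤ p := by rw [← hPp]; gcongr
    exact_mod_cast this
  have hUVM : (U0 : ℝ) * V0 ≤ M := by
    calc (U0 : ℝ) * V0 ≤ M / P * P := by gcongr
      _ = M := by field_simp
  have hUV : U0 * V0 ≤ ⌊M⌋₊ := Nat.le_floor (by push_cast; exact hUVM)
  have hA : M / 4 ≤ ((U0 * V0 : ℕ) : ℝ) := by
    push_cast
    calc M / 4 = M / P / 2 * (P / 2) := by field_simp; norm_num
      _ ≤ _ := by gcongr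
  have hUM : U0 ≤ ⌊M⌋₊ := (Nat.le_mul_of_pos_right _ hV1).trans hUV
  have hflt : ∀ x : ℝ, 1 < x → x < p → ⌊x⌋₊ < p := by
    intro x h1 h2
    rw [Nat.floor_lt (by linarith)]
    exact h2
  have hK0 := hflt K hK hKp
  have hM0 := hflt M hM hMp
  have hN0 := hflt N hN hNp
  have hN1 : 1 ≤ ⌊N⌋₊ := Nat.le_floor (by push_cast; linarith)
  have hUp : U0 < p := by omega
  obtain ⟨T, hT0, hT, hTs⟩ := hmax p χ hχ V0 hV1 hVp
  have hcomb := combine χ T V0 hT0 hT r hr a b ⌊K⌋₊ ⌊M⌋₊ ⌊N⌋₊ U0 hb hN0 hUp hUV β hβ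
  have hRR : (RR a b ⌊K⌋₊ (2 * ⌊M⌋₊) ⌊N⌋₊ : ℝ) ≤ 2 * R := by
    simp only [RR]
    push_cast
    rw [Nat.cast_natAbs, Nat.cast_natAbs]
    push_cast
    calc |(a : ℝ)| * ⌊K⌋₊ + |(b : ℝ)| * (2 * ⌊M⌋₊) * ⌊N⌋₊
        ≤ |(a : ℝ)| * K + |(b : ℝ)| * (2 * M) * N := by gcongr
      _ ≤ 2 * R := by
        rw [hRdef]
        have : 0 ≤ |(a : ℝ)| * K := by positivity
        linarith
  have hz : ((2 * RR a b ⌊K⌋₊ (2 * ⌊M⌋₊) ⌊N⌋₊ * U0 * ⌊N⌋₊ : ℕ) : ℝ) ≤ 4 * (R * M * N / P) := by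
    push_cast
    calc 2 * (RR a b ⌊K⌋₊ (2 * ⌊M⌋₊) ⌊N⌋₊ : ℝ) * U0 * ⌊N⌋₊ ≤ 2 * (2 * R) * (M / P) * N := by gcongr
      _ = _ := by ring
  have hz2 : 4 * (R * M * N / P) ≤ (p : ℝ) ^ 10 := by
    have h1 : R * M * N / P ≤ R * M * N := div_le_self (by positivity) hP1
    have h2 : R * M * N ≤ p ^ 3 * p * p := by gcongr
    have h3 : (4 : ℝ) ≤ p ^ 2 := by nlinarith
    calc 4 * (R * M * N / P) ≤ p ^ 2 * (p ^ 3 * p * p) := by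
          have : 0 ≤ R * M * N / P := by positivity
          gcongr
          linarith
      _ = (p : ℝ) ^ 7 := by ring
      _ ≤ (p : ℝ) ^ 10 := pow_le_pow_right₀ (by linarith) (by norm_num)
  set δ := r * ε / 40 with hδ
  have hδ0 : 0 < δ := by positivity
  set Tr : ℝ := C2 * ((p : ℝ) ^ 10) ^ δ with hTr
  have hTr1 : 1 ≤ Tr := by
    have : 1 ≤ ((p : ℝ) ^ 10) ^ δ := Real.one_le_rpow (one_le_pow₀ (by linarith)) hδ0.le
    calc (1 : ℝ) = 1 * 1 := by ring
      _ ≤ _ := by rw [hTr]; gcongr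
  set Tau := ⌊Tr⌋₊ with hTau
  have hTau1 : 1 ≤ Tau := Nat.le_floor (by push_cast; exact hTr1)
  have hTauf : (Tau : ℝ) ≤ Tr := Nat.floor_le (by linarith)
  have hTauD : ∀ z : ℕ, z ≠ 0 → z ≤ 2 * RR a b ⌊K⌋₊ (2 * ⌊M⌋₊) ⌊N⌋₊ * U0 * ⌊N⌋₊ →
      #z.divisors ≤ Tau := by
    intro z hz0 hzle
    refine Nat.le_floor ((hdiv z hz0).trans ?_)
    have : (z : ℝ) ≤ (p : ℝ) ^ 10 := by
      have h1 : (z : ℝ) ≤ ((2 * RR a b ⌊K⌋₊ (2 * ⌊M⌋₊) ⌊N⌋₊ * U0 * ⌊N⌋₊ : ℕ) : ℝ) := by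
        exact_mod_cast hzle
      exact h1.trans (hz.trans hz2)
    rw [hTr]
    gcongr
  have hcount := count_E p a b ⌊K⌋₊ (2 * ⌊M⌋₊) ⌊N⌋₊ U0 Tau hpr ha hb0 hK0 hN0 hUp hN1 hU1
    (by omega) hTau1 hTauD
  set W := 1 + R * M * N / (p * P) with hW
  have hH : ((2 * (2 * RR a b ⌊K⌋₊ (2 * ⌊M⌋₊) ⌊N⌋₊ * U0 * ⌊N⌋₊ / p) + 1 : ℕ) : ℝ) ≤ 8 * W := by
    have h1 : ((2 * RR a b ⌊K⌋₊ (2 * ⌊M⌋₊) ⌊N⌋₊ * U0 * ⌊N⌋₊ / p : ℕ) : ℝ) ≤ 4 * (R * M * N / P) / p :=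
      Nat.cast_div_le.trans (by gcongr)
    have h2 : 4 * (R * M * N / P) / p = 4 * (R * M * N / (p * P)) := by field_simp
    rw [h2] at h1
    have h3 : 0 ≤ R * M * N / (p * P) := by positivity
    rw [Nat.cast_add, Nat.cast_mul]
    push_cast at h1 ⊢
    rw [hW]
    linarith
  have hW0 : 0 ≤ W := by positivity
  set E := #{t ∈ Bx ⌊K⌋₊ (2 * ⌊M⌋₊) ⌊N⌋₊ U0 ×ˢ Bx ⌊K⌋₊ (2 * ⌊M⌋₊) ⌊N⌋₊ U0 |
        (p : ℤ) ∣ rv a b t.1 * wv t.2 - rv a b t.2 * wv t.1} with hEdef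
  have hE : (E : ℝ) ≤ 2 * ((N + K) * K * (M / P) * (2 * M) * (8 * W) * Tr ^ 4) := by
    have h1 : (E : ℝ) ≤ ((2 * ((⌊N⌋₊ + ⌊K⌋₊) * ⌊K⌋₊ * U0 * (2 * ⌊M⌋₊) *
      (2 * (2 * RR a b ⌊K⌋₊ (2 * ⌊M⌋₊) ⌊N⌋₊ * U0 * ⌊N⌋₊ / p) + 1) * Tau ^ 4) : ℕ) : ℝ) := by
      exact_mod_cast hcount
    refine h1.trans ?_
    generalize 2 * (2 * RR a b ⌊K⌋₊ (2 * ⌊M⌋₊) ⌊N⌋₊ * U0 * ⌊N⌋₊ / p) + 1 = H at hH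
    push_cast
    gcongr
  have hB : (#(Bx ⌊K⌋₊ (2 * ⌊M⌋₊) ⌊N⌋₊ U0) : ℝ) ≤ K * (2 * M) * N * (M / P) := by
    simp only [Bx, card_product, Nat.card_Icc, Nat.add_sub_cancel]
    push_cast
    calc (⌊K⌋₊ : ℝ) * (2 * ⌊M⌋₊ * (⌊N⌋₊ * U0)) ≤ K * (2 * M * (N * (M / P))) := by gcongr
      _ = _ := by ring
  have hfin := numeric_le r hr P K M N W (Real.sqrt p) (Tr ^ 4) (C1 * (p : ℝ) ^ (r * ε))
    ((U0 * V0 : ℕ) : ℝ) S _ _ _ hP0 (by linarith) (by linarith) (by linarith)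
    (by positivity) (by positivity) (sum_nonneg fun y _ => pow_nonneg (hT0 y) _) hS0 hA hcomb hB hE
    (by rw [hPp]; exact hTs)
  refine hfin.trans ?_
  have hpow : Tr ^ 4 * (C1 * (p : ℝ) ^ (r * ε)) = C2 ^ 4 * C1 * (p : ℝ) ^ (2 * r * ε) := by
    have h1 : (((p : ℝ) ^ 10) ^ δ) ^ 4 = (p : ℝ) ^ (r * ε) := by
      rw [← Real.rpow_natCast (p : ℝ) 10, ← Real.rpow_mul hp0.le, ← Real.rpow_natCast,
        ← Real.rpow_mul hp0.le]
      congr 1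
      rw [hδ]
      push_cast
      ring
    rw [hTr, mul_pow, h1, show 2 * r * ε = r * ε + r * ε by ring, Real.rpow_add hp0]
    ring
  rw [mul_assoc _ (Tr ^ 4), hpow]
  calc _ = ((4 ^ (2 * r) * 2 ^ (2 * r - 2) * 32) * C2 ^ 4 * C1) * (p : ℝ) ^ (2 * r * ε) *
      (K * M * N) ^ (2 * r) * ((1 + N / K) * W * (Real.sqrt p * P / (M * N) ^ 2)) := by ring
    _ ≤ _ := by
      gcongr
      exact le_max_right _ _

end TT

open Finset

/-- Theorem 2.1 (Type I trilinear character sum bound). -/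
theorem trilinear_typeI (r : ℕ) (hr : 0 < r) (ε : ℝ) (hε : 0 < ε) :
    ∃ C : ℝ, 0 < C ∧ ∀ (p : ℕ), p.Prime →
      ∀ (K M N : ℝ), 1 < K → (K : ℝ) < p → 1 < M → (M : ℝ) < p → 1 < N → (N : ℝ) < p →
      M > 4 * (p : ℝ) ^ ((1 : ℝ) / (2 * (r : ℝ))) →
      ∀ (a b : ℤ), ¬ ((p : ℤ) ∣ a * b) →
      ∀ (χ : MulChar (ZMod p) ℂ), χ ≠ 1 →
      ∀ (β : ℕ → ℕ → ℂ), (∀ k n, ‖β k n‖ ≤ 1) →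
      ‖∑ k ∈ Icc 1 ⌊K⌋₊, ∑ m ∈ Icc 1 ⌊M⌋₊, ∑ n ∈ Icc 1 ⌊N⌋₊,
          β k n * χ ((a * k + b * m * n : ℤ) : ZMod p)‖ ≤
        C * (p : ℝ) ^ ε * (K * M * N) *
          ((1 + N / K) ^ ((1 : ℝ) / (2 * (r : ℝ))) *
            (1 + ((|a| : ℝ) * K + (|b| : ℝ) * M * N) * M * N *
              (p : ℝ) ^ (-1 - 1 / (2 * (r : ℝ)) : ℝ)) ^ ((1 : ℝ) / (2 * (r : ℝ))) *
            ((p : ℝ) ^ (1 + 1 / (r : ℝ) : ℝ) / (M ^ 4 * N ^ 4)) ^ ((1 : ℝ) / (4 * (r : ℝ)))) := by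
  obtain ⟨C, hC, h⟩ := TT.core r hr ε hε
  refine ⟨C, by linarith, ?_⟩
  intro p hp K M N hK hKp hM hMp hN hNp hMP a b hab χ hχ β hβ
  haveI : Fact p.Prime := ⟨hp⟩
  have hp1 : (1 : ℝ) ≤ p := by exact_mod_cast hp.one_lt.le
  have h1 := h p K M N hK hKp hM hMp hN hNp _ rfl hMP a b hab χ hχ β hβ
  have h2 := TT.target_pow r hr p K M N ((|a| : ℝ) * K + (|b| : ℝ) * M * N) ε _ hp1 (by linarith)
    (by linarith) (by linarith) (by positivity) rfl C
  refine le_of_pow_le_pow_left₀ (n := 2 * r) (by omega) (by positivity) ?_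
  rw [h2]
  refine h1.trans ?_
  gcongr
  exact le_self_pow₀ hC (by omega)
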